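/- arXiv:2601.18370 — 5 statements merged into one kernel-verified Lean document; each statement's English description precedes it below -/
import Mathlib

section
/- Let (V; M0,...,M4; c) be a Higmanian matrix configuration with valencies ni = c(i,i,0). Set (as rational numbers) α = n1+1, β = n2/(n1+1), γ = n3(n1+1)/(n3+n4), δ = (n3+n4)/(n1+1), ε = δ−β−1, and τ = c(4,3,4). Then the intersection numbers satisfy (as equalities of rationals): c(0,2,2)=1, c(1,2,2)=α−1, c(2,2,0)=αβ, c(2,2,1)=αβ, c(2,2,2)=α(β−1), c(3,2,3)=βγ, c(3,2,4)=βγ, c(4,2,3)=β(α−γ), c(4,2,4)=β(α−γ); c(0,3,3)=1, c(1,3,3)=γ−1, c(1,3,4)=γ, c(2,3,3)=βγ, c(2,3,4)=βγ, c(3,3,0)=γδ, c(3,3,1)=δγ(γ−1)/(α−1), c(3,3,2)=δγ²/α, c(3,3,3)=2εγ−τ−α(εγ−τ)/γ, c(3,3,4)=εγ−τ, c(4,3,0)=0, c(4,3,1)=δγ(α−γ)/(α−1), c(4,3,2)=δγ(α−γ)/α, c(4,3,3)=(εγ−τ)(α−γ)/γ; c(0,4,4)=1, c(1,4,3)=α−γ,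 c(1,4,4)=α−γ−1, c(2,4,3)=β(α−γ), c(2,4,4)=β(α−γ), c(3,4,0)=0, c(3,4,1)=δγ(α−γ)/(α−1), c(3,4,2)=δγ(α−γ)/α, c(3,4,3)=(εγ−τ)(α−γ)/γ, c(3,4,4)=τ, c(4,4,0)=δ(α−γ), c(4,4,1)=δ(α−γ)(α−γ−1)/(α−1), c(4,4,2)=δ(α−γ)²/α, c(4,4,3)=τ(α−γ)/γ, c(4,4,4)=ε(α−γ)−τ; and all other intersection numbers c(i,j,k) with j ∈ {2,3,4} vanish. -/
open Matrix Finset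

/-- A *Higmanian matrix configuration* on a nonempty finite set `V`:
five nonzero symmetric `{0,1}`-matrices `M 0, …, M 4` over `ℤ` summing to the all-ones
matrix, with `M 0 = I`, structure constants `c`, parabolic conditions for
`N0 = M0 + M1` and `N1 = M0 + M1 + M2`, standard ordering `n3 ≤ n4`, and triviality of
the radicals of `M 3` and `M 4`. -/
structure HigmanianConfig (V : Type*) [Fintype V] [DecidableEq V] : Type _ where
  nonempty : Nonempty V
  M : Fin 5 → Matrix V V ℤ
  c : Fin 5 → Fin 5 → Fin 5 → ℕ
  M_ne_zero : ∀ i, M i ≠ 0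
  M_symm : ∀ i, (M i)ᵀ = M i
  M_entries : ∀ i x y, M i x y = 0 ∨ M i x y = 1
  M_zero : M 0 = 1
  sum_M : M 0 + M 1 + M 2 + M 3 + M 4 = Matrix.of fun _ _ => 1
  mul_M : ∀ i j, M i * M j = ∑ k : Fin 5, (c i j k : ℤ) • M k
  N0_sq : (M 0 + M 1) * (M 0 + M 1) = ((1 + c 1 1 0 : ℕ) : ℤ) • (M 0 + M 1)
  N1_sq : (M 0 + M 1 + M 2) * (M 0 + M 1 + M 2)
      = ((1 + c 1 1 0 + c 2 2 0 : ℕ) : ℤ) • (M 0 + M 1 + M 2)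
  N1_ne_J : M 0 + M 1 + M 2 ≠ Matrix.of fun _ _ => 1
  n3_le_n4 : c 3 3 0 ≤ c 4 4 0
  radical : ∀ j ∈ ({3, 4} : Finset (Fin 5)), ∀ T : Finset (Fin 5),
    T.Nonempty → T ⊆ ({1, 2, 3, 4} : Finset (Fin 5)) →
    ¬ ((1 + ∑ t ∈ T, M t) * (1 + ∑ t ∈ T, M t)
          = (1 + ∑ t ∈ T, (c t t 0 : ℤ)) • (1 + ∑ t ∈ T, M t)
        ∧ (1 + ∑ t ∈ T, M t) * M j = (1 + ∑ t ∈ T, (c t t 0 : ℤ)) • M j)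

/-- The valency `nᵢ = c i i 0` of the `i`-th basis matrix. -/
def HigmanianConfig.n {V : Type*} [Fintype V] [DecidableEq V]
    (X : HigmanianConfig V) (i : Fin 5) : ℕ := X.c i i 0

namespace HigmanianConfig

variable {V : Type*} [Fintype V] [DecidableEq V] (X : HigmanianConfig V)

lemma exists_pt (k : Fin 5) : ∃ x y, ∀ l, X.M l x y = if l = k then 1 else 0 := by
  have h := X.M_ne_zero k
  obtain ⟨x, y, hxy⟩ : ∃ x y, X.M k x y ≠ 0 := by
    by_contra! hc
    exact h (Matrix.ext hc)
  refine ⟨x, y, fun l => ?_⟩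
  have hs := congrFun (congrFun X.sum_M x) y
  simp only [Matrix.add_apply, Matrix.of_apply] at hs
  have h0 := X.M_entries 0 x y
  have h1 := X.M_entries 1 x y
  have h2 := X.M_entries 2 x y
  have h3 := X.M_entries 3 x y
  have h4 := X.M_entries 4 x y
  fin_cases k <;> fin_cases l <;> simp at hxy ⊢ <;> omega

lemma exists_pt_of_entry {k : Fin 5} {x y : V} (hxy : X.M k x y ≠ 0) (l : Fin 5) :
    X.M l x y = if l = k then 1 else 0 := by
  have hs := congrFun (congrFun X.sum_M x) y
  simp only [Matrix.add_apply, Matrix.of_apply] at hs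
  have h0 := X.M_entries 0 x y
  have h1 := X.M_entries 1 x y
  have h2 := X.M_entries 2 x y
  have h3 := X.M_entries 3 x y
  have h4 := X.M_entries 4 x y
  fin_cases k <;> fin_cases l <;> simp at hxy ⊢ <;> omega

lemma mul_M_apply (i j : Fin 5) (x y : V) :
    (X.M i * X.M j) x y = ∑ k, (X.c i j k : ℤ) * X.M k x y := by
  rw [X.mul_M]
  simp only [Matrix.sum_apply, Matrix.smul_apply, smul_eq_mul]

lemma coeff_ext {a b : Fin 5 → ℤ} (h : ∑ k, a k • X.M k = ∑ k, b k • X.M k) (k : Fin 5) :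
    a k = b k := by
  obtain ⟨x, y, hxy⟩ := X.exists_pt k
  have := congrFun (congrFun h x) y
  simpa only [Matrix.sum_apply, Matrix.smul_apply, smul_eq_mul, hxy, mul_ite, mul_one, mul_zero,
    Finset.sum_ite_eq', Finset.mem_univ, if_true] using this

lemma c_zero (j k : Fin 5) : (X.c 0 j k : ℤ) = if k = j then 1 else 0 := by
  refine X.coeff_ext (a := fun k => (X.c 0 j k : ℤ)) (b := fun k => if k = j then 1 else 0) ?_ k
  rw [← X.mul_M, X.M_zero]
  simp

lemma c_comm (i j k : Fin 5) : (X.c i j k : ℤ) = X.c j i k := by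
  refine X.coeff_ext (a := fun k => (X.c i j k : ℤ)) (b := fun k => (X.c j i k : ℤ)) ?_ k
  rw [← X.mul_M, ← X.mul_M]
  have h : (X.M i * X.M j)ᵀ = X.M i * X.M j := by
    rw [X.mul_M, Matrix.transpose_sum]
    simp only [Matrix.transpose_smul, X.M_symm]
  rw [← h, Matrix.transpose_mul, X.M_symm, X.M_symm]

lemma c_assoc (i j k m : Fin 5) :
    ∑ l, (X.c i j l : ℤ) * X.c l k m = ∑ l, (X.c j k l : ℤ) * X.c i l m := by
  refine X.coeff_ext (a := fun m => ∑ l, (X.c i j l : ℤ) * X.c l k m)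
    (b := fun m => ∑ l, (X.c j k l : ℤ) * X.c i l m) ?_ m
  have h := Matrix.mul_assoc (X.M i) (X.M j) (X.M k)
  rw [X.mul_M i j, X.mul_M j k, Finset.sum_mul, Finset.mul_sum] at h
  simp only [Matrix.smul_mul, Matrix.mul_smul, X.mul_M, Finset.smul_sum, smul_smul] at h
  rw [Finset.sum_comm] at h
  conv at h => rhs; rw [Finset.sum_comm]
  simpa only [Finset.sum_smul] using h

lemma M_diag (k : Fin 5) (x : V) : X.M k x x = if k = 0 then 1 else 0 := by
  apply X.exists_pt_of_entry
  simp [X.M_zero]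

lemma M_mul_entry (i j : Fin 5) (x y : V) :
    X.M i x y * X.M j x y = if i = j then X.M i x y else 0 := by
  rcases X.M_entries i x y with h | h
  · simp [h]
  · rw [X.exists_pt_of_entry (k := i) (l := j) (by simp [h]), h]
    simp [eq_comm]

lemma row_aux (i j : Fin 5) (x : V) :
    (X.c i j 0 : ℤ) = if i = j then ∑ y, X.M i x y else 0 := by
  have h := X.mul_M_apply i j x x
  simp only [M_diag, mul_ite, mul_one, mul_zero, Finset.sum_ite_eq', Finset.mem_univ, if_true] at h
  rw [← h, Matrix.mul_apply]
  have : ∀ y, X.M i x y * X.M j y x = if i = j then X.M i x y else 0 := by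
    intro y
    rw [← X.M_mul_entry]
    congr 1
    exact congrFun (congrFun (X.M_symm j) x) y
  simp only [this]
  split_ifs <;> simp

lemma c_ne (i j : Fin 5) (h : i ≠ j) : (X.c i j 0 : ℤ) = 0 := by
  obtain ⟨x⟩ := X.nonempty
  rw [X.row_aux i j x, if_neg h]

lemma row_sum (i : Fin 5) (x : V) : ∑ y, X.M i x y = X.c i i 0 := by
  rw [X.row_aux i i x, if_pos rfl]

lemma n_pos (i : Fin 5) : (0 : ℤ) < X.c i i 0 := by
  obtain ⟨x, y, h⟩ := X.exists_pt i
  rw [← X.row_sum i x]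
  have hi := h i
  rw [if_pos rfl] at hi
  refine Finset.sum_pos' (fun z _ => ?_) ⟨y, Finset.mem_univ _, by simp [hi]⟩
  rcases X.M_entries i x z with h | h <;> simp [h]

lemma c_sum (i k : Fin 5) : ∑ j, (X.c i j k : ℤ) = X.c i i 0 := by
  obtain ⟨x, y, h⟩ := X.exists_pt k
  have h1 : ∀ j, (X.c i j k : ℤ) = (X.M i * X.M j) x y := by
    intro j
    simp [X.mul_M_apply, h]
  simp only [h1]
  rw [← Matrix.sum_apply, ← Finset.mul_sum, Fin.sum_univ_five, X.sum_M, ← X.row_sum i x]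
  simp [Matrix.mul_apply]

lemma c_tri (i j k : Fin 5) : (X.c i j k : ℤ) * X.c k k 0 = X.c j k i * X.c i i 0 := by
  have h := X.c_assoc i j k 0
  rw [Finset.sum_eq_single k, Finset.sum_eq_single i] at h
  · exact h
  · intro l _ hl
    rw [X.c_ne i l hl.symm, mul_zero]
  · simp
  · intro l _ hl
    rw [X.c_ne l k hl, mul_zero]
  · simp

lemma par0 (k : Fin 5) : (X.c 0 0 k : ℤ) + X.c 0 1 k + X.c 1 0 k + X.c 1 1 k
    = if k = 0 ∨ k = 1 then (1 + X.c 1 1 0 : ℤ) else 0 := by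
  refine X.coeff_ext
    (a := fun k => (X.c 0 0 k : ℤ) + X.c 0 1 k + X.c 1 0 k + X.c 1 1 k)
    (b := fun k => if k = 0 ∨ k = 1 then (1 + X.c 1 1 0 : ℤ) else 0) ?_ k
  simp only [add_smul, Finset.sum_add_distrib, ← X.mul_M]
  have h := X.N0_sq
  rw [add_mul, mul_add, mul_add, ← add_assoc] at h
  rw [h]
  simp [Fin.sum_univ_five]

lemma par1 (k : Fin 5) : (X.c 0 0 k : ℤ) + X.c 0 1 k + X.c 1 0 k + X.c 1 1 k
      + X.c 0 2 k + X.c 2 0 k + X.c 1 2 k + X.c 2 1 k + X.c 2 2 k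
    = if k = 3 ∨ k = 4 then 0 else (1 + X.c 1 1 0 + X.c 2 2 0 : ℤ) := by
  refine X.coeff_ext
    (a := fun k => (X.c 0 0 k : ℤ) + X.c 0 1 k + X.c 1 0 k + X.c 1 1 k
      + X.c 0 2 k + X.c 2 0 k + X.c 1 2 k + X.c 2 1 k + X.c 2 2 k)
    (b := fun k => if k = 3 ∨ k = 4 then 0 else (1 + X.c 1 1 0 + X.c 2 2 0 : ℤ)) ?_ k
  simp only [add_smul, Finset.sum_add_distrib, ← X.mul_M]
  have h := X.N1_sq
  trans (X.M 0 + X.M 1 + X.M 2) * (X.M 0 + X.M 1 + X.M 2)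
  · noncomm_ring
  rw [h]
  simp [Fin.sum_univ_five]

lemma rad1 (h : ∀ k, (X.c 1 3 k : ℤ) = if k = 3 then X.c 1 1 0 else 0) : False := by
  refine X.radical 3 (by simp) {1} (by simp) (by simp) ⟨?_, ?_⟩
  · have := X.N0_sq
    rw [X.M_zero] at this
    simpa using this
  · simp only [Finset.sum_singleton, add_mul, one_mul, X.mul_M, h]
    simp [add_smul]

end HigmanianConfig

/-- The arithmetic core: the intersection numbers follow from the relations among them. -/
lemma higmanian_core (c : Fin 5 → Fin 5 → Fin 5 → ℚ) (n1 n2 n3 n4 : ℚ)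
    (p1 : 0 < n1) (p2 : 0 < n2) (p3 : 0 < n3) (p4 : 0 < n4)
    (e1 : c 1 1 0 = n1) (e2 : c 2 2 0 = n2) (e3 : c 3 3 0 = n3) (e4 : c 4 4 0 = n4)
    (hz : ∀ j k, c 0 j k = if k = j then 1 else 0)
    (hcomm : ∀ i j k, c i j k = c j i k)
    (hassoc : ∀ i j k m, ∑ l, c i j l * c l k m = ∑ l, c j k l * c i l m)
    (hne : ∀ i j, i ≠ j → c i j 0 = 0)
    (hnn : ∀ i j k, 0 ≤ c i j k)
    (hsum : ∀ i k, ∑ j, c i j k = c i i 0)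
    (htri : ∀ i j k, c i j k * c k k 0 = c j k i * c i i 0)
    (hp0 : ∀ k, c 0 0 k + c 0 1 k + c 1 0 k + c 1 1 k = if k = 0 ∨ k = 1 then 1 + n1 else 0)
    (hp1 : ∀ k, c 0 0 k + c 0 1 k + c 1 0 k + c 1 1 k + c 0 2 k + c 2 0 k + c 1 2 k + c 2 1 k
      + c 2 2 k = if k = 3 ∨ k = 4 then 0 else 1 + n1 + n2)
    (hrad : ¬ ∀ k, c 1 3 k = if k = 3 then n1 else 0)
    (α β γ δ ε τ : ℚ)
    (hα : α = n1 + 1) (hβ : β = n2 / (n1 + 1)) (hγ : γ = n3 * (n1 + 1) / (n3 + n4))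
    (hδ : δ = (n3 + n4) / (n1 + 1)) (hε : ε = δ - β - 1) (hτ : τ = c 4 3 4) :
    ∀ r t : Fin 5,
      c r 2 t =
        !![0, 0, 1, 0, 0;
           0, 0, α - 1, 0, 0;
           α * β, α * β, α * (β - 1), 0, 0;
           0, 0, 0, β * γ, β * γ;
           0, 0, 0, β * (α - γ), β * (α - γ)] r t ∧
      c r 3 t =
        !![0, 0, 0, 1, 0;
           0, 0, 0, γ - 1, γ;
           0, 0, 0, β * γ, β * γ;
           γ * δ, δ * γ * (γ - 1) / (α - 1), δ * γ ^ 2 / α,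
             2 * ε * γ - τ - α * (ε * γ - τ) / γ, ε * γ - τ;
           0, δ * γ * (α - γ) / (α - 1), δ * γ * (α - γ) / α,
             (ε * γ - τ) * (α - γ) / γ, τ] r t ∧
      c r 4 t =
        !![0, 0, 0, 0, 1;
           0, 0, 0, α - γ, α - γ - 1;
           0, 0, 0, β * (α - γ), β * (α - γ);
           0, δ * γ * (α - γ) / (α - 1), δ * γ * (α - γ) / α,
             (ε * γ - τ) * (α - γ) / γ, τ;
           δ * (α - γ), δ * (α - γ) * (α - γ - 1) / (α - 1), δ * (α - γ) ^ 2 / α,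
             τ * (α - γ) / γ, ε * (α - γ) - τ] r t := by
  have pα : 0 < α := by rw [hα]; linarith
  have pγ : 0 < γ := by rw [hγ]; positivity
  have hn1 : n1 = α - 1 := by rw [hα]; ring
  have hn2 : n2 = α * β := by rw [hα, hβ]; field_simp
  have hn3 : n3 = γ * δ := by rw [hγ, hδ]; field_simp
  have hn4 : n4 = δ * (α - γ) := by rw [hγ, hδ, hα]; field_simp; ring
  have pδ : 0 < δ := by rw [hδ]; positivity
  have pβ : 0 < β := by rw [hβ]; positivity
  have pαγ : 0 < α - γ := by
    rw [hn4] at p4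
    exact (mul_pos_iff_of_pos_left pδ).1 p4
  have z00 := fun k => hz 0 k
  -- products with the index 0 on the left
  have hz' : ∀ j k, c j 0 k = if k = j then 1 else 0 := fun j k => by rw [hcomm, hz]
  simp only [Fin.sum_univ_five] at hsum hassoc
  -- M1 * M1
  have c112 : c 1 1 2 = 0 := by simpa [hz, hz'] using hp0 2
  have c113 : c 1 1 3 = 0 := by simpa [hz, hz'] using hp0 3
  have c114 : c 1 1 4 = 0 := by simpa [hz, hz'] using hp0 4
  have c111 : c 1 1 1 = n1 - 1 := by
    have := hp0 1
    simp [hz, hz'] at this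
    linarith
  -- M1 * M2 and M2 * M2
  have q2 : 2 + 2 * c 1 2 2 + c 2 2 2 = 1 + n1 + n2 := by
    have := hp1 2
    simp [hz, hz', hcomm 2 1, c112] at this
    linarith
  have q3 : 2 * c 1 2 3 + c 2 2 3 = 0 := by
    have := hp1 3
    simp [hz, hz', hcomm 2 1, c113] at this
    linarith
  have q4 : 2 * c 1 2 4 + c 2 2 4 = 0 := by
    have := hp1 4
    simp [hz, hz', hcomm 2 1, c114] at this
    linarith
  have c123 : c 1 2 3 = 0 := by linarith [hnn 1 2 3, hnn 2 2 3]
  have c223 : c 2 2 3 = 0 := by linarith [hnn 1 2 3, hnn 2 2 3]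
  have c124 : c 1 2 4 = 0 := by linarith [hnn 1 2 4, hnn 2 2 4]
  have c224 : c 2 2 4 = 0 := by linarith [hnn 1 2 4, hnn 2 2 4]
  have zero_of : ∀ {a b : ℚ}, 0 < b → a * b = 0 → a = 0 := fun hb h =>
    (mul_eq_zero.1 h).resolve_right hb.ne'
  -- symmetric forms of the triangle relation
  have tri : ∀ i j k, c i j k * c k k 0 = c i k j * c j j 0 := fun i j k => by
    rw [hcomm i j k, htri j i k]
  have c121 : c 1 2 1 = 0 := by
    have := tri 1 2 1
    rw [c112, e1, zero_mul] at this
    exact zero_of p1 this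
  have c131 : c 1 3 1 = 0 := by
    have := tri 1 3 1
    rw [c113, e1, zero_mul] at this
    exact zero_of p1 this
  have c141 : c 1 4 1 = 0 := by
    have := tri 1 4 1
    rw [c114, e1, zero_mul] at this
    exact zero_of p1 this
  have c132 : c 1 3 2 = 0 := by
    have := tri 1 3 2
    rw [c123, e2, zero_mul] at this
    exact zero_of p2 this
  have c142 : c 1 4 2 = 0 := by
    have := tri 1 4 2
    rw [c124, e2, zero_mul] at this
    exact zero_of p2 this
  have c231 : c 2 3 1 = 0 := by
    have := tri 2 3 1
    rw [hcomm 2 1, c123, e1, zero_mul] at this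
    exact zero_of p1 this
  have c241 : c 2 4 1 = 0 := by
    have := tri 2 4 1
    rw [hcomm 2 1, c124, e1, zero_mul] at this
    exact zero_of p1 this
  have c232 : c 2 3 2 = 0 := by
    have := tri 2 3 2
    rw [c223, e2, zero_mul] at this
    exact zero_of p2 this
  have c242 : c 2 4 2 = 0 := by
    have := tri 2 4 2
    rw [c224, e2, zero_mul] at this
    exact zero_of p2 this
  have c122 : c 1 2 2 = n1 := by
    have := hsum 1 2
    simp [hz', c112, c132, c142, e1] at this
    exact this
  have c222 : c 2 2 2 = n2 - n1 - 1 := by linarith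
  have c221 : c 2 2 1 = n2 := by
    have := hsum 2 1
    simp [hz', hcomm 2 1, c121, c231, c241, e2] at this
    exact this
  -- M1 * M3 and M1 * M4
  have s13 : c 1 3 3 + c 1 4 3 = n1 := by
    have := hsum 1 3
    simp [hz', c113, c123, e1] at this
    exact this
  have s14 : c 1 3 4 + c 1 4 4 = n1 := by
    have := hsum 1 4
    simp [hz', c114, c124, e1] at this
    exact this
  have t134 : c 1 3 4 * n4 = c 1 4 3 * n3 := by
    have := tri 1 3 4
    rwa [e4, e3] at this
  have a3 := hassoc 1 1 3 3
  have a4 := hassoc 1 1 3 4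
  simp [hz, hz', hne 1 3, c111, c112, c113, c114, c131, c132, e1] at a3 a4
  have key : c 1 3 4 = c 1 3 3 + 1 := by
    by_contra hk
    have k1 : (n1 - c 1 3 3) * (c 1 3 4 - (c 1 3 3 + 1)) = 0 := by
      have : c 1 4 3 = n1 - c 1 3 3 := by linarith
      rw [this] at a3
      linarith
    have k2 : c 1 3 4 * (c 1 3 4 - (c 1 3 3 + 1)) = 0 := by
      have : c 1 4 4 = n1 - c 1 3 4 := by linarith
      rw [this] at a4
      linarith
    have hk' : c 1 3 4 - (c 1 3 3 + 1) ≠ 0 := sub_ne_zero.2 hk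
    have k3 := (mul_eq_zero.1 k1).resolve_right hk'
    have k4 := (mul_eq_zero.1 k2).resolve_right hk'
    apply hrad
    intro k
    fin_cases k
    · simpa using hne 1 3 (by decide)
    · simpa using c131
    · simpa using c132
    · simp
      linarith
    · simpa using k4
  have c134 : c 1 3 4 = γ := by
    have h1 : c 1 3 4 * n4 = (n1 + 1 - c 1 3 4) * n3 := by
      rw [t134]
      congr 1
      linarith
    rw [hγ, eq_div_iff (by positivity)]
    linarith
  have c133 : c 1 3 3 = γ - 1 := by linarith
  have c143 : c 1 4 3 = α - γ := by linarith
  have c144 : c 1 4 4 = α - γ - 1 := by linarith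
  -- M2 * M3 and M2 * M4
  have s23 : c 2 3 3 + c 2 4 3 = n2 := by
    have := hsum 2 3
    simp [hz', hcomm 2 1, c123, c223, e2] at this
    exact this
  have s24 : c 2 3 4 + c 2 4 4 = n2 := by
    have := hsum 2 4
    simp [hz', hcomm 2 1, c124, c224, e2] at this
    exact this
  have t234 : c 2 3 4 * n4 = c 2 4 3 * n3 := by
    have := tri 2 3 4
    rwa [e4, e3] at this
  have b3 := hassoc 1 2 3 3
  simp [hz, hz', hne 1 2, hne 2 3, c121, c122, c123, c124, c231, c232, c133, c143] at b3
  have c2eq : c 2 3 3 = c 2 3 4 := by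
    have : (c 2 3 3 - c 2 3 4) * (α - γ) = 0 := by
      rw [hn1] at b3
      linarith
    exact sub_eq_zero.1 (zero_of pαγ this)
  have c234 : c 2 3 4 = β * γ := by
    have h1 : c 2 3 4 * n4 = (n2 - c 2 3 4) * n3 := by
      rw [t234]
      congr 1
      linarith
    rw [hn2, hn3, hn4] at h1
    have h2 : (c 2 3 4 - β * γ) * (α * δ) = 0 := by linarith
    exact sub_eq_zero.1 (zero_of (mul_pos pα pδ) h2)
  have c233 : c 2 3 3 = β * γ := by rw [c2eq, c234]
  have c243 : c 2 4 3 = β * (α - γ) := by linarith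
  have c244 : c 2 4 4 = β * (α - γ) := by linarith
  -- M3 * M3, M3 * M4, M4 * M4
  have hα1 : α - 1 ≠ 0 := by rw [← hn1]; exact p1.ne'
  have c331 : c 3 3 1 = δ * γ * (γ - 1) / (α - 1) := by
    have := tri 3 3 1
    rw [hcomm 3 1, c133, e1, e3, hn1, hn3] at this
    rw [eq_div_iff hα1, this]
    ring
  have c341 : c 3 4 1 = δ * γ * (α - γ) / (α - 1) := by
    have := tri 3 4 1
    rw [hcomm 3 1, c134, e1, e4, hn1, hn4] at this
    rw [eq_div_iff hα1, this]
    ring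
  have c441 : c 4 4 1 = δ * (α - γ) * (α - γ - 1) / (α - 1) := by
    have := tri 4 4 1
    rw [hcomm 4 1, c144, e1, e4, hn1, hn4] at this
    rw [eq_div_iff hα1, this]
    ring
  have c332 : c 3 3 2 = δ * γ ^ 2 / α := by
    have := tri 3 3 2
    rw [hcomm 3 2, c233, e2, e3, hn2, hn3] at this
    rw [eq_div_iff pα.ne']
    apply mul_right_cancel₀ pβ.ne'
    linarith
  have c342 : c 3 4 2 = δ * γ * (α - γ) / α := by
    have := tri 3 4 2
    rw [hcomm 3 2, c234, e2, e4, hn2, hn4] at this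
    rw [eq_div_iff pα.ne']
    apply mul_right_cancel₀ pβ.ne'
    linarith
  have c442 : c 4 4 2 = δ * (α - γ) ^ 2 / α := by
    have := tri 4 4 2
    rw [hcomm 4 2, c244, e2, e4, hn2, hn4] at this
    rw [eq_div_iff pα.ne']
    apply mul_right_cancel₀ pβ.ne'
    linarith
  have c344 : c 3 4 4 = τ := by rw [hτ, hcomm]
  have c334 : c 3 3 4 = ε * γ - τ := by
    have := hsum 3 4
    simp [hz', hcomm 3 1, hcomm 3 2, c134, c234, c344, e3] at this
    rw [hε]
    linarith
  have c343 : c 3 4 3 = (ε * γ - τ) * (α - γ) / γ := by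
    have := tri 3 4 3
    rw [c334, e3, e4, hn3, hn4] at this
    rw [eq_div_iff pγ.ne']
    apply mul_right_cancel₀ pδ.ne'
    linarith
  have c333 : c 3 3 3 = 2 * ε * γ - τ - α * (ε * γ - τ) / γ := by
    have := hsum 3 3
    simp [hz', hcomm 3 1, hcomm 3 2, c133, c233, c343, e3] at this
    have h1 : c 3 3 3 = ε * γ - (ε * γ - τ) * (α - γ) / γ := by
      rw [hε] at this ⊢
      linarith
    rw [h1]
    field_simp
    ring
  have c443 : c 4 4 3 = τ * (α - γ) / γ := by
    have := tri 4 4 3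
    rw [hcomm 4 3, c344, e3, e4, hn3, hn4] at this
    rw [eq_div_iff pγ.ne']
    apply mul_right_cancel₀ pδ.ne'
    linarith
  have c444 : c 4 4 4 = ε * (α - γ) - τ := by
    have := hsum 4 4
    simp [hz', hcomm 4 1, hcomm 4 2, hcomm 4 3, c144, c244, c344, e4] at this
    rw [hε]
    linarith
  have f1 : n2 - n1 - 1 = α * (β - 1) := by linarith
  intro r t
  refine ⟨?_, ?_, ?_⟩
  · fin_cases r <;> fin_cases t <;>
      simp [hz, hne, hcomm 3 2, hcomm 4 2, e2, c121, c122, c123, c124, c221, c222, c223, c224,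
        c231, c232, c233, c234, c241, c242, c243, c244, ← hn1, ← hn2, f1]
  · fin_cases r <;> fin_cases t <;>
      simp [hz, hne, hcomm 4 3, e3, c131, c132, c133, c134,
        c231, c232, c233, c234, c331, c332, c333, c334, c341, c342, c343, c344, ← hn3]
  · fin_cases r <;> fin_cases t <;>
      simp [hz, hne, e4, c141, c142, c143, c144,
        c241, c242, c243, c244, c341, c342, c343, c344, c441, c442, c443, c444, ← hn4]

/-- parametrization of the intersection numbers of a Higmanian
configuration (Lemma on intersection matrices): for `j ∈ {2,3,4}` the numbers
`c(r,j,t)` are given by the matrices `C2`, `C3`, `C4` below (all other such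
intersection numbers vanish, being the remaining zero entries). -/
theorem higmanian_intersection_matrices {V : Type*} [Fintype V] [DecidableEq V]
    (X : HigmanianConfig V) (α β γ δ ε τ : ℚ)
    (hα : α = (X.n 1 : ℚ) + 1)
    (hβ : β = (X.n 2 : ℚ) / ((X.n 1 : ℚ) + 1))
    (hγ : γ = (X.n 3 : ℚ) * ((X.n 1 : ℚ) + 1) / ((X.n 3 : ℚ) + (X.n 4 : ℚ)))
    (hδ : δ = ((X.n 3 : ℚ) + (X.n 4 : ℚ)) / ((X.n 1 : ℚ) + 1))
    (hε : ε = δ - β - 1)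
    (hτ : τ = (X.c 4 3 4 : ℚ)) :
    ∀ r t : Fin 5,
      (X.c r 2 t : ℚ) =
        !![0, 0, 1, 0, 0;
           0, 0, α - 1, 0, 0;
           α * β, α * β, α * (β - 1), 0, 0;
           0, 0, 0, β * γ, β * γ;
           0, 0, 0, β * (α - γ), β * (α - γ)] r t ∧
      (X.c r 3 t : ℚ) =
        !![0, 0, 0, 1, 0;
           0, 0, 0, γ - 1, γ;
           0, 0, 0, β * γ, β * γ;
           γ * δ, δ * γ * (γ - 1) / (α - 1), δ * γ ^ 2 / α,
             2 * ε * γ - τ - α * (ε * γ - τ) / γ, ε * γ - τ;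
           0, δ * γ * (α - γ) / (α - 1), δ * γ * (α - γ) / α,
             (ε * γ - τ) * (α - γ) / γ, τ] r t ∧
      (X.c r 4 t : ℚ) =
        !![0, 0, 0, 0, 1;
           0, 0, 0, α - γ, α - γ - 1;
           0, 0, 0, β * (α - γ), β * (α - γ);
           0, δ * γ * (α - γ) / (α - 1), δ * γ * (α - γ) / α,
             (ε * γ - τ) * (α - γ) / γ, τ;
           δ * (α - γ), δ * (α - γ) * (α - γ - 1) / (α - 1), δ * (α - γ) ^ 2 / α,
             τ * (α - γ) / γ, ε * (α - γ) - τ] r t := by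
  refine higmanian_core (fun i j k => (X.c i j k : ℚ)) (X.n 1) (X.n 2) (X.n 3) (X.n 4)
    ?_ ?_ ?_ ?_ rfl rfl rfl rfl ?_ ?_ ?_ ?_ ?_ ?_ ?_ ?_ ?_ ?_ α β γ δ ε τ hα hβ hγ hδ hε hτ
  · exact_mod_cast X.n_pos 1
  · exact_mod_cast X.n_pos 2
  · exact_mod_cast X.n_pos 3
  · exact_mod_cast X.n_pos 4
  · intro j k
    exact_mod_cast X.c_zero j k
  · intro i j k
    exact_mod_cast X.c_comm i j k
  · intro i j k m
    exact_mod_cast X.c_assoc i j k m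
  · intro i j h
    exact_mod_cast X.c_ne i j h
  · intro i j k
    positivity
  · intro i k
    exact_mod_cast X.c_sum i k
  · intro i j k
    exact_mod_cast X.c_tri i j k
  · intro k
    exact_mod_cast X.par0 k
  · intro k
    exact_mod_cast X.par1 k
  · intro h
    refine X.rad1 fun k => ?_
    exact_mod_cast h k
end

section
/- Let p be a prime, e ≥ 1, q = p^e, and let r, s be positive integers with r ≥ s ≥ 1 and 2r ≥ s+2. Let G be any finite abelian group of order q^{2r−s}(q^s−1)/(q−1) containing a subgroup isomorphic to the elementary abelian group (ZMod p)^{e·r} (an elementary abelian subgroup of order q^r). Then there exist a subgroup N ≤ G of order q^s and a subset D ⊆ G such that D is a divisible difference set relative to N satisfying the intersection condition, with parameters m = q^{2r−2s}(q^s−1)/(q−1), n = q^s, k = q^{2r−s−1}(q^s−1)/(q−1), λ1 = q^{2r−s−1}(q^{s−1}−1)/(q−1), λ2 = q^{2r−s−2}(q^s−1)/(q−1); moreover |D ∩ (N+g)| = q^{s−1} for every g ∈ G. -/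
open Classical

section AuxDDS
open scoped LinearAlgebra.Projectivization

theorem aux_fiber {A B : Type*} [AddCommGroup A] [AddCommGroup B] [Fintype A] [Fintype B] [DecidableEq B]
    (f : A →+ B) (hf : Function.Surjective f) (b : B) :
    (Finset.univ.filter (fun a => f a = b)).card * Fintype.card B = Fintype.card A := by
  have h := Finset.card_eq_sum_card_fiberwise (f := f) (s := Finset.univ) (t := Finset.univ)
    (fun _ _ => Finset.mem_coe.2 (Finset.mem_univ _))
  rw [Finset.sum_congr rfl (fun x _ =>
    AddMonoidHom.card_fiber_eq_of_mem_range f (hf x) (hf b))] at h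
  rw [Finset.sum_const, Finset.card_univ, Finset.card_univ, smul_eq_mul] at h
  rw [h, mul_comm]

variable {K : Type*} [Field K] [Fintype K]

theorem aux_fiber1 {W : Type*} [AddCommGroup W] [Module K W] [Fintype W] (n : ℕ)
    (hW : Fintype.card W = Fintype.card K ^ n) (f : W →ₗ[K] K) (hf : f ≠ 0) (b : K) :
    (Finset.univ.filter (fun a => f a = b)).card = Fintype.card K ^ (n - 1) := by
  have hs := LinearMap.surjective hf
  have h := aux_fiber f.toAddMonoidHom hs b
  have hK : 1 < Fintype.card K := Fintype.one_lt_card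
  have hn : n ≠ 0 := by
    rintro rfl
    have := Fintype.card_le_of_surjective f hs
    simp at hW; omega
  obtain ⟨m, rfl⟩ := Nat.exists_eq_succ_of_ne_zero hn
  rw [hW, pow_succ] at h
  have h' := Nat.eq_of_mul_eq_mul_right (by omega) h
  rw [Nat.succ_sub_one, ← h']
  congr 1

theorem aux_fiber2 {W : Type*} [AddCommGroup W] [Module K W] [Fintype W] (n : ℕ)
    (hW : Fintype.card W = Fintype.card K ^ n) (f g : W →ₗ[K] K)
    (hfg : ∀ α β : K, α • f + β • g = 0 → α = 0 ∧ β = 0) (b c : K) :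
    (Finset.univ.filter (fun a => f a = b ∧ g a = c)).card = Fintype.card K ^ (n - 2) := by
  have hs : Function.Surjective (f.prod g) := by
    rw [← LinearMap.range_eq_top]
    by_contra hne
    obtain ⟨h, h0, hle⟩ := Submodule.exists_le_ker_of_lt_top _ (lt_top_iff_ne_top.2 hne)
    have key : ∀ u v, h (u, v) = h (1, 0) * u + h (0, 1) * v := by
      intro u v
      have : ((u, v) : K × K) = u • (1, 0) + v • (0, 1) := by simp
      rw [this, map_add, map_smul, map_smul]; simp [mul_comm]
    have := hfg (h (1,0)) (h (0,1)) (by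
      ext w
      have := hle (LinearMap.mem_range_self (f.prod g) w)
      rw [LinearMap.mem_ker, LinearMap.prod_apply] at this
      exact (key _ _).symm.trans this)
    apply h0
    apply LinearMap.ext
    rintro ⟨u, v⟩
    rw [key, this.1, this.2]; simp
  have h := aux_fiber (f.prod g).toAddMonoidHom hs (b, c)
  have hK : 1 < Fintype.card K := Fintype.one_lt_card
  have hn : 2 ≤ n := by
    have := Fintype.card_le_of_surjective _ hs
    rw [Fintype.card_prod, hW, ← sq] at this
    exact (Nat.pow_le_pow_iff_right hK).1 this
  obtain ⟨m, rfl⟩ := Nat.exists_eq_add_of_le' hn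
  rw [hW, pow_add, Fintype.card_prod, ← sq] at h
  have h' := Nat.eq_of_mul_eq_mul_right (by positivity) h
  rw [Nat.add_sub_cancel, ← h']
  congr 1
  ext a
  rw [Finset.mem_filter, Finset.mem_filter, ← Prod.mk_inj]
  rfl

/-- dot product functional -/
noncomputable def dotL {n : ℕ} (a : Fin n → K) : (Fin n → K) →ₗ[K] K :=
  Fintype.linearCombination K a

theorem dotL_apply {n : ℕ} (a x : Fin n → K) : dotL a x = ∑ i, x i * a i := by
  simp [dotL, Fintype.linearCombination_apply]

theorem dotL_comm {n : ℕ} (a x : Fin n → K) : dotL a x = dotL x a := by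
  simp [dotL_apply, mul_comm]

theorem dotL_smul {n : ℕ} (c : K) (a : Fin n → K) : dotL (c • a) = c • dotL a := by
  apply LinearMap.ext; intro x; simp [dotL_apply, Finset.mul_sum, mul_add, Finset.sum_add_distrib, mul_left_comm]

theorem dotL_add {n : ℕ} (a b : Fin n → K) : dotL (a + b) = dotL a + dotL b := by
  apply LinearMap.ext; intro x; simp [dotL_apply, Finset.mul_sum, mul_add, Finset.sum_add_distrib, mul_left_comm]

theorem dotL_inj {n : ℕ} {a : Fin n → K} (h : dotL a = 0) : a = 0 := by
  ext i
  have := LinearMap.congr_fun h (Pi.single i 1)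
  simpa [dotL_apply, Pi.single_apply] using this

theorem aux_proj {n : ℕ} [Fintype (ℙ K (Fin n → K))] (x : Fin n → K) (hx : x ≠ 0) :
    (Finset.univ.filter (fun a : ℙ K (Fin n → K) => dotL a.rep x = 0)).card
      = (Fintype.card K ^ (n - 1) - 1) / (Fintype.card K - 1) := by
  have hK : 1 < Fintype.card K := Fintype.one_lt_card
  have h1 := aux_fiber1 (K := K) n (by simp) (dotL x) (fun h => hx (dotL_inj h)) 0
  have h2 : (Finset.univ.filter (fun v : Fin n → K => dotL x v = 0)).erase 0 =
      ((Finset.univ.filter (fun a : ℙ K (Fin n → K) => dotL a.rep x = 0)) ×ˢ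
        (Finset.univ : Finset Kˣ)).image (fun ac => (ac.2 : K) • ac.1.rep) := by
    ext v
    simp only [Finset.mem_erase, Finset.mem_filter, Finset.mem_univ, true_and, Finset.mem_image,
      Finset.mem_product, and_true, Prod.exists]
    constructor
    · rintro ⟨hv, h⟩
      obtain ⟨c, hc⟩ := Projectivization.exists_smul_eq_mk_rep K v hv
      refine ⟨Projectivization.mk K v hv, c⁻¹, ?_, ?_⟩
      · rw [← hc, Units.smul_def, dotL_smul, LinearMap.smul_apply, dotL_comm, h, smul_zero]
      · rw [← hc, ← Units.smul_def, inv_smul_smul]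
    · rintro ⟨a, c, h, rfl⟩
      refine ⟨smul_ne_zero c.ne_zero a.rep_nonzero, ?_⟩
      rw [map_smul, dotL_comm, h, smul_zero]
  have h3 := congrArg Finset.card h2
  rw [Finset.card_erase_of_mem (by simp), h1, Finset.card_image_of_injOn, Finset.card_product,
    Finset.card_univ, Fintype.card_units] at h3
  · rw [h3, Nat.mul_div_cancel _ (by omega)]
  · rintro ⟨a, c⟩ - ⟨a', c'⟩ - h
    simp only at h
    have haa : a = a' := by
      rw [← a.mk_rep, ← a'.mk_rep, Projectivization.mk_eq_mk_iff']
      refine ⟨(c : K)⁻¹ * c', ?_⟩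
      rw [mul_smul, ← h, smul_smul, inv_mul_cancel₀ c.ne_zero, one_smul]
    subst haa
    have := smul_left_injective K a.rep_nonzero h
    simpa [Units.ext_iff] using this

/-- the functional attached to an index -/
noncomputable def fun2 {s t : ℕ} (i : ℙ K (Fin s → K) × (Fin t → K)) :
    ((Fin s → K) × (Fin t → K)) →ₗ[K] K :=
  (dotL i.1.rep).coprod (dotL i.2)

theorem fun2_apply {s t : ℕ} (i : ℙ K (Fin s → K) × (Fin t → K)) (w) :
    fun2 i w = dotL i.1.rep w.1 + dotL i.2 w.2 := rfl

theorem fun2_indep {s t : ℕ} (i j : ℙ K (Fin s → K) × (Fin t → K)) (hij : i ≠ j) (α β : K)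
    (h : α • fun2 i + β • fun2 j = 0) : α = 0 ∧ β = 0 := by
  have ha : α • i.1.rep + β • j.1.rep = 0 := by
    apply dotL_inj
    refine LinearMap.ext fun x => ?_
    simpa [dotL_add, dotL_smul, fun2_apply] using LinearMap.congr_fun h (LinearMap.inl K _ _ x)
  have hb : α • i.2 + β • j.2 = 0 := by
    apply dotL_inj
    refine LinearMap.ext fun x => ?_
    simpa [dotL_add, dotL_smul, fun2_apply] using LinearMap.congr_fun h (LinearMap.inr K _ _ x)
  by_cases hα : α = 0
  · subst hα
    simp [j.1.rep_nonzero] at ha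
    exact ⟨rfl, ha⟩
  · exfalso
    apply hij
    have h1 : i.1 = j.1 := by
      rw [← i.1.mk_rep, ← j.1.mk_rep, Projectivization.mk_eq_mk_iff']
      refine ⟨-(α⁻¹ * β), ?_⟩
      rw [neg_smul, mul_smul, eq_neg_of_add_eq_zero_right ha, smul_neg, smul_smul,
        inv_mul_cancel₀ hα, one_smul, neg_neg]
    rw [h1, ← add_smul] at ha
    have h2 : α + β = 0 := (smul_eq_zero.1 ha).resolve_right j.1.rep_nonzero
    rw [eq_neg_of_add_eq_zero_right h2, neg_smul, ← sub_eq_add_neg, ← smul_sub] at hb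
    exact Prod.ext h1 (sub_eq_zero.1 ((smul_eq_zero.1 hb).resolve_left hα))

theorem fun2_ne {s t : ℕ} (i : ℙ K (Fin s → K) × (Fin t → K)) : fun2 i ≠ 0 := by
  intro h
  apply i.1.rep_nonzero
  apply dotL_inj
  refine LinearMap.ext fun x => ?_
  simpa [fun2_apply] using LinearMap.congr_fun h (LinearMap.inl K _ _ x)

/-- number of functionals killing a vector -/
theorem count_idx {s t : ℕ} [Fintype (ℙ K (Fin s → K))] (w : (Fin s → K) × (Fin t → K))
    (hw : w ≠ 0) :
    (Finset.univ.filter (fun i : ℙ K (Fin s → K) × (Fin t → K) => fun2 i w = 0)).card =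
      if w.2 = 0 then Fintype.card K ^ t * ((Fintype.card K ^ (s - 1) - 1) / (Fintype.card K - 1))
      else Fintype.card K ^ (t - 1) * Fintype.card (ℙ K (Fin s → K)) := by
  obtain ⟨x, y⟩ := w
  split_ifs with hy
  · simp only at hy
    subst hy
    have hx : x ≠ 0 := by rintro rfl; exact hw rfl
    rw [← aux_proj x hx]
    have : (Finset.univ.filter (fun i : ℙ K (Fin s → K) × (Fin t → K) => fun2 i (x, 0) = 0)) =
      (Finset.univ.filter (fun a : ℙ K (Fin s → K) => dotL a.rep x = 0)) ×ˢ Finset.univ := by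
      ext i; simp [fun2_apply]
    rw [this, Finset.card_product, Finset.card_univ, mul_comm]; simp
  · simp only at hy
    rw [Finset.card_filter, Fintype.sum_prod_type]
    have : ∀ a : ℙ K (Fin s → K), (∑ b : Fin t → K, if fun2 (a, b) (x, y) = 0 then 1 else 0) =
        Fintype.card K ^ (t - 1) := by
      intro a
      rw [← Finset.card_filter, ← aux_fiber1 (K := K) t (by simp) (dotL y)
        (fun h => hy (dotL_inj h)) (- dotL a.rep x)]
      congr 1
      ext b
      rw [Finset.mem_filter, Finset.mem_filter, fun2_apply, dotL_comm y b, eq_neg_iff_add_eq_zero,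
        add_comm]
    simp only [this]
    simp [mul_comm]

theorem core_dds (s t : ℕ) (hs : 1 ≤ s) (hst : 2 ≤ s + t) (q : ℕ) (hq : q = Fintype.card K)
    (G : Type*) [AddCommGroup G] [Fintype G] [DecidableEq G]
    (hcard : Fintype.card G = q ^ (s + 2 * t) * ((q ^ s - 1) / (q - 1)))
    (φ : ((Fin s → K) × (Fin t → K)) →+ G) (hφ : Function.Injective φ) :
    ∃ (N : AddSubgroup G) (D : Finset G),
      Nat.card N = q ^ s ∧
      N.index = q ^ (2 * t) * ((q ^ s - 1) / (q - 1)) ∧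
      D.Nonempty ∧
      D.card = q ^ (s + 2 * t - 1) * ((q ^ s - 1) / (q - 1)) ∧
      (∀ g : G, g ≠ 0 →
        ((D ×ˢ D).filter (fun pr => pr.1 - pr.2 = g)).card
          = if g ∈ N then q ^ (s + 2 * t - 1) * ((q ^ (s - 1) - 1) / (q - 1))
            else q ^ (s + 2 * t - 2) * ((q ^ s - 1) / (q - 1))) ∧
      (∀ g : G, (D.filter (fun x => x - g ∈ N)).card = q ^ (s - 1)) := by
  have : Fintype (ℙ K (Fin s → K)) := Fintype.ofFinite _
  have hK : 1 < q := hq ▸ Fintype.one_lt_card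
  have hP : Fintype.card (ℙ K (Fin s → K)) = (q ^ s - 1) / (q - 1) := by
    rw [← Nat.card_eq_fintype_card, Projectivization.card'' K]
    simp [hq]
  rw [← hP] at hcard ⊢
  set P := Fintype.card (ℙ K (Fin s → K)) with hPdef
  have hPpos : 0 < P := by
    rw [hP]
    have : q ^ 1 ≤ q ^ s := Nat.pow_le_pow_right (by omega) hs
    rw [pow_one] at this
    apply Nat.div_pos <;> omega
  have hW : Fintype.card ((Fin s → K) × (Fin t → K)) = Fintype.card K ^ (s + t) := by
    simp [pow_add]
  have hI : Fintype.card (ℙ K (Fin s → K) × (Fin t → K)) = q ^ t * P := by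
    rw [Fintype.card_prod, ← hPdef]; simp [hq, mul_comm]
  -- coset representatives
  have hindex : φ.range.index = q ^ t * P := by
    have h := AddSubgroup.card_mul_index φ.range
    rw [Nat.card_congr (AddMonoidHom.ofInjective hφ).symm.toEquiv, Nat.card_eq_fintype_card,
      Nat.card_eq_fintype_card, hcard, hW, ← hq] at h
    apply Nat.eq_of_mul_eq_mul_left (show 0 < q ^ (s + t) by positivity)
    rw [h]; ring
  obtain ⟨σ⟩ : Nonempty ((ℙ K (Fin s → K) × (Fin t → K)) ≃ (G ⧸ φ.range)) := by
    rw [← Fintype.card_eq, hI, ← hindex, AddSubgroup.index, Nat.card_eq_fintype_card]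
  set c : (ℙ K (Fin s → K) × (Fin t → K)) → G := fun i => (σ i).out with hc
  have hcinj : ∀ i j, c i - c j ∈ φ.range → i = j := by
    intro i j h
    apply σ.injective
    rw [← QuotientAddGroup.out_eq' (σ i), ← QuotientAddGroup.out_eq' (σ j), eq_comm,
      QuotientAddGroup.eq, neg_add_eq_sub]
    exact h
  have hbij : Function.Bijective (fun z : (ℙ K (Fin s → K) × (Fin t → K)) ×
      ((Fin s → K) × (Fin t → K)) => c z.1 + φ z.2) := by
    rw [Fintype.bijective_iff_injective_and_card]
    constructor
    · rintro ⟨i, w⟩ ⟨j, v⟩ h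
      simp only at h
      have hij : i = j := by
        apply hcinj
        refine ⟨v - w, ?_⟩
        rw [map_sub, sub_eq_sub_iff_add_eq_add, add_comm, ← h]
      subst hij
      simpa using hφ (add_left_cancel h)
    · rw [Fintype.card_prod, hI, hW, hcard, ← hq]; ring
  obtain ⟨E, hE⟩ : ∃ E : ((ℙ K (Fin s → K) × (Fin t → K)) ×
      ((Fin s → K) × (Fin t → K))) ≃ G, ∀ i w, E (i, w) = c i + φ w :=
    ⟨Equiv.ofBijective _ hbij, fun i w => rfl⟩
  set N : AddSubgroup G := (φ.comp (AddMonoidHom.inl (Fin s → K) (Fin t → K))).range with hN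
  have hNmem : ∀ w, φ w ∈ N ↔ w.2 = 0 := by
    rintro ⟨x, y⟩
    constructor
    · rintro ⟨v, hv⟩
      have := hφ hv
      simp at this
      exact this.2.symm
    · rintro h
      exact ⟨x, by simp at h; simp [h]⟩
  have hNle : N ≤ φ.range := by
    rintro _ ⟨v, rfl⟩
    exact ⟨_, rfl⟩
  have hNcard : Nat.card N = q ^ s := by
    have : Function.Injective (φ.comp (AddMonoidHom.inl (Fin s → K) (Fin t → K))) := by
      intro a b h
      simpa using hφ h
    rw [Nat.card_congr (AddMonoidHom.ofInjective this).symm.toEquiv]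
    simp [hq]
  clear_value N
  clear hN
  set D : Finset G := Finset.univ.filter
    (fun x => fun2 (E.symm x).1 (E.symm x).2 = 0) with hD
  have hDmem : ∀ i w, E (i, w) ∈ D ↔ fun2 i w = 0 := by
    intro i w
    rw [hD, Finset.mem_filter, Equiv.symm_apply_apply]
    simp
  have hker : ∀ i : ℙ K (Fin s → K) × (Fin t → K),
      (Finset.univ.filter (fun w => fun2 i w = 0)).card = q ^ (s + t - 1) := by
    intro i
    rw [aux_fiber1 (s + t) hW (fun2 i) (fun2_ne i) 0, hq]
  have hDcard : D.card = q ^ (s + 2 * t - 1) * P := by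
    have h1 : D.card = (Finset.univ.filter (fun z : (ℙ K (Fin s → K) × (Fin t → K)) ×
      ((Fin s → K) × (Fin t → K)) => fun2 z.1 z.2 = 0)).card := by
      symm
      apply Finset.card_bij (fun z _ => E z)
      · rintro ⟨i, w⟩ h
        rw [hDmem]; simpa using h
      · intro a _ b _ h; exact E.injective h
      · intro x hx
        refine ⟨E.symm x, ?_, by simp⟩
        simpa [hD] using hx
    rw [h1, Finset.card_filter, Fintype.sum_prod_type]
    simp only [← Finset.card_filter, hker]
    rw [Finset.sum_const, Finset.card_univ, hI, smul_eq_mul]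
    rw [show s + 2 * t - 1 = t + (s + t - 1) by omega, pow_add]; ring
  refine ⟨N, D, hNcard, ?_, ?_, hDcard, ?_, ?_⟩
  · have h := AddSubgroup.card_mul_index N
    rw [hNcard, Nat.card_eq_fintype_card, hcard] at h
    apply Nat.eq_of_mul_eq_mul_left (show 0 < q ^ s by positivity)
    rw [h]; ring
  · rw [← Finset.card_pos, hDcard]; positivity
  · intro g hg
    have h1 : ((D ×ˢ D).filter (fun pr => pr.1 - pr.2 = g)).card =
        (Finset.univ.filter (fun z : (ℙ K (Fin s → K) × (Fin t → K)) ×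
      ((Fin s → K) × (Fin t → K)) => fun2 z.1 z.2 = 0 ∧ E z + g ∈ D)).card := by
      symm
      apply Finset.card_bij (fun z _ => (E z + g, E z))
      · rintro ⟨i, w⟩ h
        rw [Finset.mem_filter] at h
        rw [Finset.mem_filter, Finset.mem_product]
        exact ⟨⟨h.2.2, (hDmem i w).2 h.2.1⟩, by simp⟩
      · intro a _ b _ h; exact E.injective (Prod.ext_iff.1 h).2
      · rintro ⟨x, y⟩ h
        rw [Finset.mem_filter, Finset.mem_product] at h
        obtain ⟨⟨hx, hy⟩, h⟩ := h
        simp only at hx hy h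
        have hxy : y + g = x := by rw [← h]; abel
        refine ⟨E.symm y, ?_, by simp [hxy]⟩
        rw [Finset.mem_filter, Equiv.apply_symm_apply, hxy]
        exact ⟨Finset.mem_univ _, (Finset.mem_filter.1 hy).2, hx⟩
    rw [h1, Finset.card_filter, Fintype.sum_prod_type]
    simp only [← Finset.card_filter]
    by_cases hgH : g ∈ φ.range
    · obtain ⟨w0, rfl⟩ := hgH
      have hw0 : w0 ≠ 0 := by rintro rfl; simp at hg
      have h2 : ∀ i : ℙ K (Fin s → K) × (Fin t → K), (Finset.univ.filter (fun w =>
          fun2 i w = 0 ∧ E (i, w) + φ w0 ∈ D)).card =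
          if fun2 i w0 = 0 then q ^ (s + t - 1) else 0 := by
        intro i
        have h3 : ∀ w, E (i, w) + φ w0 = E (i, w + w0) := by
          intro w; rw [hE, hE, map_add, add_assoc]
        simp only [h3, hDmem, map_add]
        split_ifs with h
        · rw [← hker i]
          congr 1
          ext w
          simp [h]
        · rw [Finset.card_eq_zero, Finset.filter_eq_empty_iff]
          rintro w - ⟨h4, h5⟩
          rw [h4, zero_add] at h5
          exact h h5
      simp only [h2]
      rw [← Finset.sum_filter, Finset.sum_const, count_idx w0 hw0, smul_eq_mul, ← hPdef, ← hq]
      simp only [hNmem]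
      split_ifs with h
      · rw [show s + 2 * t - 1 = t + (s + t - 1) by omega, pow_add]; ring
      · have ht : 1 ≤ t := by
          by_contra ht
          have : t = 0 := by omega
          subst this
          exact h (Subsingleton.elim _ _)
        rw [show s + 2 * t - 2 = (t - 1) + (s + t - 1) by omega, pow_add]; ring
    · rw [if_neg (fun h => hgH (hNle h))]
      have h2 : ∀ i : ℙ K (Fin s → K) × (Fin t → K), (Finset.univ.filter (fun w =>
          fun2 i w = 0 ∧ E (i, w) + g ∈ D)).card = q ^ (s + t - 2) := by
        intro i
        obtain ⟨⟨j, u⟩, hju⟩ := E.surjective (c i + g)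
        rw [hE] at hju
        have hij : i ≠ j := by
          rintro rfl
          exact hgH ⟨u, add_left_cancel hju⟩
        have h3 : ∀ w, E (i, w) + g = E (j, w + u) := by
          intro w
          rw [hE, hE, map_add, add_right_comm, ← hju]; abel
        simp only [h3, hDmem, map_add]
        rw [hq, ← aux_fiber2 (s + t) hW (fun2 i) (fun2 j) (fun2_indep i j hij) 0 (- fun2 j u)]
        congr 1
        ext w
        rw [Finset.mem_filter, Finset.mem_filter, eq_neg_iff_add_eq_zero]
      simp only [h2]
      rw [Finset.sum_const, Finset.card_univ, hI, smul_eq_mul,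
        show s + 2 * t - 2 = t + (s + t - 2) by omega, pow_add]; ring
  · intro g
    obtain ⟨⟨j, u⟩, rfl⟩ := E.surjective g
    have hne : dotL j.1.rep ≠ 0 := fun h => j.1.rep_nonzero (dotL_inj h)
    rw [hq, ← aux_fiber1 (K := K) s (by simp) (dotL j.1.rep) hne (- dotL j.2 u.2)]
    symm
    apply Finset.card_bij (fun x _ => E (j, (x, u.2)))
    · intro x hx
      rw [Finset.mem_filter] at hx
      rw [Finset.mem_filter, hDmem, fun2_apply, hE, hE, add_sub_add_left_eq_sub, ← map_sub, hNmem]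
      exact ⟨eq_neg_iff_add_eq_zero.1 hx.2, by simp⟩
    · intro a _ b _ h
      simpa using E.injective h
    · intro x hx
      obtain ⟨⟨i, w⟩, rfl⟩ := E.surjective x
      rw [Finset.mem_filter, hDmem] at hx
      obtain ⟨h1, h2⟩ := hx
      rw [hE, hE] at h2
      have hij : i = j := by
        apply hcinj
        have : c i - c j = (c i + φ w - (c j + φ u)) + φ (u - w) := by rw [map_sub]; abel
        rw [this]
        exact add_mem (hNle h2) ⟨_, rfl⟩
      subst hij
      rw [add_sub_add_left_eq_sub, ← map_sub, hNmem, Prod.snd_sub, sub_eq_zero] at h2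
      refine ⟨w.1, ?_, by rw [← h2]⟩
      rw [Finset.mem_filter, eq_neg_iff_add_eq_zero, ← h2]
      exact ⟨Finset.mem_univ _, h1⟩

end AuxDDS

/-- (Pott's construction) for `q = p^e` a prime power and `r ≥ s ≥ 1`
with `2r ≥ s + 2`, every finite abelian group `G` of order
`q^(2r−s)·(q^s−1)/(q−1)` containing an elementary abelian subgroup of order `q^r`
possesses a divisible difference set `D` relative to a subgroup `N` of order `q^s`,
satisfying the intersection condition, with parameters
`m = q^(2r−2s)·(q^s−1)/(q−1)`, `n = q^s`, `k = q^(2r−s−1)·(q^s−1)/(q−1)`,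
`λ1 = q^(2r−s−1)·(q^(s−1)−1)/(q−1)`, `λ2 = q^(2r−s−2)·(q^s−1)/(q−1)`;
moreover `|D ∩ (N + g)| = q^(s−1)` for all `g`. -/
theorem dds_of_elementary_abelian_subgroup
    (p : ℕ) (hp : p.Prime) (e : ℕ) (he : 1 ≤ e) (q : ℕ) (hq : q = p ^ e)
    (r s : ℕ) (hs : 1 ≤ s) (hsr : s ≤ r) (h2r : s + 2 ≤ 2 * r)
    (G : Type*) [AddCommGroup G] [Fintype G] [DecidableEq G]
    (hcard : Fintype.card G = q ^ (2 * r - s) * ((q ^ s - 1) / (q - 1)))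
    (hsub : ∃ H : AddSubgroup G, Nonempty (H ≃+ (Fin (e * r) → ZMod p))) :
    ∃ (N : AddSubgroup G) (D : Finset G),
      Nat.card N = q ^ s ∧
      N.index = q ^ (2 * r - 2 * s) * ((q ^ s - 1) / (q - 1)) ∧
      D.Nonempty ∧
      D.card = q ^ (2 * r - s - 1) * ((q ^ s - 1) / (q - 1)) ∧
      (∀ g : G, g ≠ 0 →
        ((D ×ˢ D).filter (fun pr => pr.1 - pr.2 = g)).card
          = if g ∈ N then q ^ (2 * r - s - 1) * ((q ^ (s - 1) - 1) / (q - 1))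
            else q ^ (2 * r - s - 2) * ((q ^ s - 1) / (q - 1))) ∧
      (∀ g : G, (D.filter (fun x => x - g ∈ N)).card = q ^ (s - 1)) := by
  haveI : Fact p.Prime := ⟨hp⟩
  obtain ⟨H, ⟨f⟩⟩ := hsub
  have : Fintype (GaloisField p e) := Fintype.ofFinite _
  have hqK : q = Fintype.card (GaloisField p e) := by
    rw [← Nat.card_eq_fintype_card, GaloisField.card p e (by omega), hq]
  obtain ⟨t, rfl⟩ := Nat.exists_eq_add_of_le hsr
  have hfr : Module.finrank (ZMod p) ((Fin s → GaloisField p e) × (Fin t → GaloisField p e)) =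
      Module.finrank (ZMod p) (Fin (e * (s + t)) → ZMod p) := by
    rw [Module.finrank_prod, Module.finrank_pi_fintype, Module.finrank_pi_fintype]
    simp [GaloisField.finrank p (show e ≠ 0 by omega)]
    ring
  let L := LinearEquiv.ofFinrankEq (R := ZMod p) _ _ hfr
  rw [show 2 * (s + t) - s = s + 2 * t by omega] at hcard ⊢
  rw [show 2 * (s + t) - 2 * s = 2 * t by omega]
  refine core_dds (K := GaloisField p e) s t hs (by omega) q hqK G hcard
    (H.subtype.comp (f.symm.toAddMonoidHom.comp L.toAddEquiv.toAddMonoidHom)) ?_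
  exact H.subtype_injective.comp (f.symm.injective.comp L.injective)
end

section
/- In the semidirect-product setup G = F ⋊ ⟨τ⟩ with subsets X1, X2, X3, X4, S ⊆ G built from an ordering A_0, ..., A_{l−1} of the F_q-hyperplanes of F, assume the ordering is chosen so that S = ⋃_{i=0}^{l−1}(F\A_i)τ^i is inverse-closed in G. Then each of the sets {1_G}, X1, X2, X3, X4 is inverse-closed, the ℤ-submodule of the group algebra MonoidAlgebra ℤ G spanned by the five elements underline({1_G}), underline(X1), underline(X2), underline(X3), underline(X4) is closed under multiplication (i.e. it is a subring of MonoidAlgebra ℤ G, an S-ring of rank 5 over G), and moreover {g ∈ G : g·X3 = X3} = {1_G} and {g ∈ G : g·X4 = X4} = {1_G}. -/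
open Classical

/-- The element `underline Y = Σ_{y ∈ Y} y` of the group algebra `MonoidAlgebra ℤ G`
attached to a subset `Y` of a finite group `G`. -/
noncomputable def underline {G : Type*} [Group G] [Fintype G] (Y : Set G) :
    MonoidAlgebra ℤ G :=
  ∑ y ∈ Y.toFinset, MonoidAlgebra.single y (1 : ℤ)

section helpers

set_option linter.unusedSectionVars false

variable {K F G : Type*} [Field K] [Field F] [Algebra K F] [Fintype K] [Fintype F]
  [Group G] [Fintype G]

/-- basis element -/
noncomputable def bT (g : G) : MonoidAlgebra ℤ G := MonoidAlgebra.single g (1 : ℤ)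

lemma bT_mul (g h : G) : bT (g * h) = bT g * bT h := by
  simp [bT, MonoidAlgebra.single_mul_single]

lemma bT_one : bT (1 : G) = 1 := rfl

lemma underline_eq (Y : Set G) : underline Y = ∑ g : G, if g ∈ Y then bT g else 0 := by
  unfold underline bT
  rw [← Finset.sum_filter]
  congr 1
  ext; simp

/-- sum over a subspace -/
noncomputable def aS (ι : F → G) (W : Submodule K F) : MonoidAlgebra ℤ G :=
  ∑ x : W, bT (ι x)

lemma aS_eq (ι : F → G) (W : Submodule K F) :
    aS ι W = ∑ x : F, if x ∈ W then bT (ι x) else 0 := by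
  unfold aS
  rw [← Finset.sum_filter]
  exact (Finset.sum_subtype _ (by simp) (fun x => bT (ι x))).symm

lemma bT_mul_aS (ι : F → G) (hι : ∀ x y : F, ι (x + y) = ι x * ι y) (W : Submodule K F)
    (w : W) : bT (ι w) * aS ι W = aS ι W := by
  unfold aS
  rw [Finset.mul_sum]
  simp_rw [← bT_mul, ← hι]
  exact Fintype.sum_equiv (Equiv.addLeft w) _ _ (fun x => by simp)

lemma aS_mul_of_le (ι : F → G) (hι : ∀ x y : F, ι (x + y) = ι x * ι y) (W V : Submodule K F)
    (h : W ≤ V) : aS ι W * aS ι V = (Fintype.card W) • aS ι V := by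
  conv_lhs => rw [aS, Finset.sum_mul]
  rw [Finset.sum_congr rfl (fun (x : W) _ => bT_mul_aS ι hι V ⟨x, h x.2⟩)]
  simp

lemma aS_comm (ι : F → G) (hι : ∀ x y : F, ι (x + y) = ι x * ι y) (W V : Submodule K F) :
    aS ι W * aS ι V = aS ι V * aS ι W := by
  unfold aS
  rw [Finset.sum_mul_sum, Finset.sum_mul_sum, Finset.sum_comm]
  simp_rw [← bT_mul, ← hι, add_comm]

lemma aS_mul_of_sup (ι : F → G) (hι : ∀ x y : F, ι (x + y) = ι x * ι y) (W V : Submodule K F)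
    (h : W ⊔ V = ⊤) (c : ℕ) (hc : c * Fintype.card F = Fintype.card W * Fintype.card V) :
    aS ι W * aS ι V = c • aS ι (⊤ : Submodule K F) := by
  let f : W × V →+ F := (W.subtype.coprod V.subtype).toAddMonoidHom
  have hf : ∀ p, f p = p.1 + p.2 := fun p => rfl
  have hsurj : Function.Surjective f := by
    intro x
    have hx : x ∈ W ⊔ V := by rw [h]; trivial
    obtain ⟨y, hy, z, hz, rfl⟩ := Submodule.mem_sup.1 hx
    exact ⟨(⟨y, hy⟩, ⟨z, hz⟩), rfl⟩
  have hfib : ∀ x : F, (Finset.univ.filter (fun p => f p = x)).card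
      = (Finset.univ.filter (fun p => f p = 0)).card := by
    intro x
    obtain ⟨p, rfl⟩ := hsurj x
    refine Finset.card_bij (fun a _ => a - p) ?_ ?_ ?_
    · intro a ha; simp at ha ⊢; rw [ha, sub_self]
    · intro a _ b _ hab; exact sub_left_injective hab
    · intro b hb; exact ⟨b + p, by simp at hb ⊢; exact hb, by simp⟩
  have hcc : (Finset.univ.filter (fun p => f p = 0)).card = c := by
    have h1 : Fintype.card (W × V) = ∑ x : F, (Finset.univ.filter (fun p => f p = x)).card :=
      Finset.card_eq_sum_card_fiberwise (fun _ _ => Finset.mem_coe.2 (Finset.mem_univ _))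
    simp_rw [hfib] at h1
    rw [Fintype.card_prod, ← hc, Finset.sum_const, smul_eq_mul, mul_comm, Finset.card_univ] at h1
    exact (Nat.eq_of_mul_eq_mul_left Fintype.card_pos h1).symm
  have e1 : aS ι W * aS ι V = ∑ p : W × V, bT (ι (f p)) := by
    unfold aS
    rw [Finset.sum_mul_sum, Fintype.sum_prod_type]
    simp_rw [← bT_mul, ← hι, hf]
  rw [e1, ← Finset.sum_fiberwise' Finset.univ f (fun x => bT (ι x)), aS_eq]
  simp_rw [Finset.sum_const, hfib, hcc]
  simp [Finset.smul_sum]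

lemma mul_total (x : MonoidAlgebra ℤ G) : ∃ n : ℤ, x * (∑ g : G, bT g) = n • ∑ g : G, bT g := by
  have key : ∀ g : G, bT g * (∑ g : G, bT g) = ∑ g : G, bT g := by
    intro g
    rw [Finset.mul_sum]
    simp_rw [← bT_mul]
    exact Fintype.sum_equiv (Equiv.mulLeft g) _ _ (fun x => by simp)
  induction x using MonoidAlgebra.induction_on with
  | of g => exact ⟨1, by simpa [bT] using key g⟩
  | add a b ha hb =>
    obtain ⟨n, hn⟩ := ha; obtain ⟨m, hm⟩ := hb
    exact ⟨n + m, by rw [add_mul, hn, hm, add_smul]⟩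
  | smul r a ha =>
    obtain ⟨n, hn⟩ := ha
    exact ⟨r * n, by rw [smul_mul_assoc, hn, mul_smul]⟩

lemma total_mul (x : MonoidAlgebra ℤ G) : ∃ n : ℤ, (∑ g : G, bT g) * x = n • ∑ g : G, bT g := by
  have key : ∀ g : G, (∑ g : G, bT g) * bT g = ∑ g : G, bT g := by
    intro g
    rw [Finset.sum_mul]
    simp_rw [← bT_mul]
    exact Fintype.sum_equiv (Equiv.mulRight g) _ _ (fun x => by simp)
  induction x using MonoidAlgebra.induction_on with
  | of g => exact ⟨1, by simpa [bT] using key g⟩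
  | add a b ha hb =>
    obtain ⟨n, hn⟩ := ha; obtain ⟨m, hm⟩ := hb
    exact ⟨n + m, by rw [mul_add, hn, hm, add_smul]⟩
  | smul r a ha =>
    obtain ⟨n, hn⟩ := ha
    exact ⟨r * n, by rw [mul_smul_comm, hn, mul_smul]⟩


set_option maxHeartbeats 2000000 in
/-- closure of the span of the five auxiliary elements under multiplication -/
lemma core_mul {l : ℕ} [NeZero l] (ι : F → G) (hι : ∀ x y : F, ι (x + y) = ι x * ι y)
    (t : G) (τ : Fˣ)
    (hti : ∀ (i : ℕ) (x : F), t ^ i * ι x = ι (((τ ^ i : Fˣ) : F) * x) * t ^ i)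
    (hbij : Function.Bijective (fun p : F × Fin l => ι p.1 * t ^ (p.2 : ℕ)))
    (hneg : ∀ i : Fin l, t ^ ((-i : Fin l) : ℕ) = (t ^ (i : ℕ))⁻¹)
    (A : Fin l → Submodule K F) (c1 c2 : ℕ)
    (hc1 : ∀ i, Fintype.card (A i) = c1)
    (hc2 : ∀ i j, i ≠ j → aS ι (A i) * aS ι (A j) = c2 • aS ι (⊤ : Submodule K F))
    (hflip : ∀ (i : Fin l) (x : F), x ∈ A (-i) ↔ ((τ ^ (i : ℕ) : Fˣ) : F) * x ∈ A i)
    (N : ℕ) (hN : ∀ x : F, x ≠ 0 → (Finset.univ.filter (fun i => x ∈ A i)).card = N)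
    (D : MonoidAlgebra ℤ G) (hD : D = ∑ i : Fin l, aS ι (A i) * bT (t ^ (i : ℕ)))
    (P : Submodule ℤ (MonoidAlgebra ℤ G)) (h1 : 1 ∈ P) (hA0 : aS ι (A 0) ∈ P)
    (hF : aS ι (⊤ : Submodule K F) ∈ P) (hDP : D ∈ P) (hG : ∑ g : G, bT g ∈ P) :
    ∀ a ∈ ({1, aS ι (A 0), aS ι (⊤ : Submodule K F), D, ∑ g : G, bT g} :
      Set (MonoidAlgebra ℤ G)),
    ∀ b ∈ ({1, aS ι (A 0), aS ι (⊤ : Submodule K F), D, ∑ g : G, bT g} :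
      Set (MonoidAlgebra ℤ G)), a * b ∈ P := by
  have hι0 : ι 0 = 1 := by
    have := hι 0 0
    rw [add_zero] at this
    exact (left_eq_mul.1 this)
  set aF := aS ι (⊤ : Submodule K F) with haF
  set Gs := ∑ g : G, bT g with hGs
  have hcomm : ∀ i : ℕ, bT (t ^ i) * aF = aF * bT (t ^ i) := by
    intro i
    rw [haF, aS_eq, Finset.mul_sum, Finset.sum_mul]
    simp only [Submodule.mem_top, if_true]
    simp_rw [← bT_mul, hti]
    exact Fintype.sum_equiv (Units.mulLeft (τ ^ i)) _ _ (fun x => by simp)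
  have hGs1 : Gs = ∑ i : Fin l, aF * bT (t ^ (i : ℕ)) := by
    rw [hGs, ← hbij.sum_comp, Fintype.sum_prod_type, Finset.sum_comm]
    refine Finset.sum_congr rfl fun i _ => ?_
    rw [haF, aS_eq, Finset.sum_mul]
    simp only [Submodule.mem_top, if_true, bT_mul]
  have hGs2 : Gs = ∑ i : Fin l, bT (t ^ (i : ℕ))⁻¹ * aF := by
    rw [hGs1]
    refine Fintype.sum_equiv (Equiv.neg (Fin l)) _ _ (fun i => ?_)
    rw [← hcomm, Equiv.neg_apply, ← hneg, neg_neg]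
  have hconj : ∀ i : Fin l, bT (t ^ (i : ℕ))⁻¹ * aS ι (A i) =
      aS ι (A (-i)) * bT (t ^ (i : ℕ))⁻¹ := by
    intro i
    rw [aS_eq, aS_eq, Finset.mul_sum, Finset.sum_mul]
    symm
    refine Fintype.sum_equiv (Units.mulLeft (τ ^ (i : ℕ))) _ _ (fun x => ?_)
    simp only [Units.mulLeft_apply, ← hflip]
    split_ifs
    · rw [← bT_mul, ← bT_mul]
      congr 1
      rw [eq_inv_mul_iff_mul_eq, ← mul_assoc, hti, mul_inv_cancel_right]
    · simp
  have hD2 : D = ∑ i : Fin l, bT (t ^ (i : ℕ))⁻¹ * aS ι (A i) := by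
    rw [hD]
    refine Fintype.sum_equiv (Equiv.neg (Fin l)) _ _ (fun i => ?_)
    rw [hconj, Equiv.neg_apply, ← hneg, neg_neg]
  have hAA : ∀ i j, aS ι (A i) * aS ι (A j) =
      c2 • aF + if i = j then (c1 • aS ι (A i) - c2 • aF) else 0 := by
    intro i j
    split_ifs with h
    · subst h
      rw [aS_mul_of_le ι hι _ _ le_rfl, hc1]; abel
    · rw [hc2 i j h, add_zero]
  have hsum : ∑ i : Fin l, aS ι (A i) = N • aF + ((l : ℤ) - N) • 1 := by
    have e1 : ∑ i : Fin l, aS ι (A i) = ∑ x : F, (if x = 0 then l else N) • bT (ι x) := by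
      simp_rw [aS_eq]
      rw [Finset.sum_comm]
      refine Finset.sum_congr rfl fun x _ => ?_
      rw [← Finset.sum_filter, Finset.sum_const]
      split_ifs with h
      · subst h; simp
      · rw [hN x h]
    have e2 : ∀ x : F, (if x = 0 then l else N) • bT (ι x) =
        N • bT (ι x) + if x = 0 then ((l : ℤ) - N) • (1 : MonoidAlgebra ℤ G) else 0 := by
      intro x
      split_ifs with h
      · subst h
        rw [hι0, bT_one, sub_smul, natCast_zsmul, natCast_zsmul]; abel
      · simp
    rw [e1, Finset.sum_congr rfl (fun x _ => e2 x), Finset.sum_add_distrib, haF, aS_eq]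
    simp [Finset.smul_sum]
  have hAF : ∀ i, aS ι (A i) * aF = c1 • aF := by
    intro i
    rw [haF, aS_mul_of_le ι hι _ _ le_top, hc1]
  have hFA : ∀ i, aF * aS ι (A i) = c1 • aF := by
    intro i
    rw [haF, aS_comm ι hι, ← haF, hAF]
  have hFD : aF * D = c1 • Gs := by
    rw [hD, hGs1, Finset.mul_sum, Finset.smul_sum]
    simp_rw [← mul_assoc, hFA, smul_mul_assoc]
  have hDF : D * aF = c1 • Gs := by
    rw [hD2, hGs2, Finset.sum_mul, Finset.smul_sum]
    simp_rw [mul_assoc, hAF, mul_smul_comm]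
  have hAD : aS ι (A 0) * D = c2 • Gs + (c1 • aS ι (A 0) - c2 • aF) := by
    rw [hD, hGs1, Finset.mul_sum, Finset.smul_sum]
    simp_rw [← mul_assoc, hAA, add_mul, Finset.sum_add_distrib, smul_mul_assoc, ite_mul, zero_mul]
    simp [bT_one]
  have hDA : D * aS ι (A 0) = c2 • Gs + (c1 • aS ι (A 0) - c2 • aF) := by
    rw [hD2, hGs2, Finset.sum_mul, Finset.smul_sum]
    simp_rw [mul_assoc, hAA, mul_add, Finset.sum_add_distrib, mul_smul_comm, mul_ite, mul_zero]
    simp [bT_one]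
  have hself : ∀ i : Fin l, bT (t ^ (i : ℕ))⁻¹ * aF * bT (t ^ (i : ℕ)) = aF := by
    intro i
    rw [mul_assoc, ← hcomm, ← mul_assoc, ← bT_mul, inv_mul_cancel, bT_one, one_mul]
  have hself2 : ∀ i : Fin l, bT (t ^ (i : ℕ))⁻¹ * aS ι (A i) * bT (t ^ (i : ℕ)) =
      aS ι (A (-i)) := by
    intro i
    rw [hconj, mul_assoc, ← bT_mul, inv_mul_cancel, bT_one, mul_one]
  have hDD : ∃ n : ℤ, D * D = c2 • n • Gs +
      (c1 • (N • aF + ((l : ℤ) - N) • 1) - c2 • l • aF) := by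
    obtain ⟨n, hn⟩ := mul_total (∑ i : Fin l, bT (t ^ (i : ℕ))⁻¹)
    refine ⟨n, ?_⟩
    have e1 : ∀ i j : Fin l, (bT (t ^ (i : ℕ))⁻¹ * aS ι (A i)) * (aS ι (A j) * bT (t ^ (j : ℕ)))
        = c2 • (bT (t ^ (i : ℕ))⁻¹ * (aF * bT (t ^ (j : ℕ)))) +
          if i = j then (c1 • aS ι (A (-i)) - c2 • aF) else 0 := by
      intro i j
      have : (bT (t ^ (i : ℕ))⁻¹ * aS ι (A i)) * (aS ι (A j) * bT (t ^ (j : ℕ))) =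
        bT (t ^ (i : ℕ))⁻¹ * (aS ι (A i) * aS ι (A j)) * bT (t ^ (j : ℕ)) := by
        simp only [mul_assoc]
      rw [this, hAA, mul_add, add_mul]
      congr 1
      · simp only [mul_smul_comm, smul_mul_assoc, mul_assoc]
      · split_ifs with h
        · subst h
          rw [mul_sub, sub_mul, mul_smul_comm, mul_smul_comm, smul_mul_assoc, smul_mul_assoc,
            hself, hself2]
        · simp
    have e2 : D * D = (∑ i : Fin l, bT (t ^ (i : ℕ))⁻¹ * aS ι (A i)) *
        ∑ i : Fin l, aS ι (A i) * bT (t ^ (i : ℕ)) := by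
      rw [← hD, ← hD2]
    have e3 : ∑ i : Fin l, aS ι (A (-i)) = ∑ i : Fin l, aS ι (A i) :=
      Fintype.sum_equiv (Equiv.neg (Fin l)) _ _ (fun i => rfl)
    rw [e2, Finset.sum_mul_sum]
    simp_rw [e1, Finset.sum_add_distrib]
    rw [← hn, ← hGs, hGs1, Finset.sum_mul_sum]
    simp only [Finset.sum_ite_eq, Finset.mem_univ, if_true, Finset.sum_sub_distrib,
      ← Finset.smul_sum, e3, hsum]
    simp
  have hTl : ∀ x, x * Gs ∈ P := by
    intro x
    obtain ⟨n, hn⟩ := mul_total x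
    rw [hn]; exact P.smul_mem _ hG
  have hTr : ∀ x, Gs * x ∈ P := by
    intro x
    obtain ⟨n, hn⟩ := total_mul x
    rw [hn]; exact P.smul_mem _ hG
  have hnP : ∀ (n : ℕ) x, x ∈ P → n • x ∈ P := fun n x hx => P.nsmul_mem hx n
  have mAD : c2 • Gs + (c1 • aS ι (A 0) - c2 • aF) ∈ P :=
    P.add_mem (hnP _ _ hG) (P.sub_mem (hnP _ _ hA0) (hnP _ _ hF))
  have mDD : D * D ∈ P := by
    obtain ⟨n, hn⟩ := hDD
    rw [hn]
    exact P.add_mem (hnP _ _ (P.smul_mem _ hG)) (P.sub_mem (hnP _ _ (P.add_mem (hnP _ _ hF)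
      (P.smul_mem _ h1))) (hnP _ _ (hnP _ _ hF)))
  have mAA : aS ι (A 0) * aS ι (A 0) ∈ P := by
    rw [aS_mul_of_le ι hι _ _ le_rfl]; exact hnP _ _ hA0
  have mFF : aF * aF ∈ P := by
    rw [haF, aS_mul_of_le ι hι _ _ le_rfl]; exact hnP _ _ hF
  intro a ha b hb
  simp only [Set.mem_insert_iff, Set.mem_singleton_iff] at ha hb
  rcases ha with rfl | rfl | rfl | ha | rfl
  · rw [one_mul]; rcases hb with rfl | rfl | rfl | rfl | rfl <;> assumption
  · rcases hb with rfl | rfl | rfl | hb | rfl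
    · rwa [mul_one]
    · exact mAA
    · rw [hAF]; exact hnP _ _ hF
    · rw [hb, hAD]; exact mAD
    · exact hTl _
  · rcases hb with rfl | rfl | rfl | hb | rfl
    · rwa [mul_one]
    · rw [hFA]; exact hnP _ _ hF
    · exact mFF
    · rw [hb, hFD]; exact hnP _ _ hG
    · exact hTl _
  · rw [ha]
    rcases hb with rfl | rfl | rfl | hb | rfl
    · rwa [mul_one]
    · rw [hDA]; exact mAD
    · rw [hDF]; exact hnP _ _ hG
    · rw [hb]; exact mDD
    · exact hTl _
  · exact hTr _

end helpers

set_option maxHeartbeats 2000000 in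
/-- in the setup `G = F ⋊ ⟨τ⟩` (given axiomatically by `ι`, `t` below),
with `X1, X2, X3, X4, S` built from an ordering `A 0, …, A (l-1)` of the
`K`-hyperplanes of `F` such that `S` is inverse-closed, each of the sets
`{1}, X1, X2, X3, X4` is inverse-closed, the `ℤ`-span of their `underline`s in
`MonoidAlgebra ℤ G` is closed under multiplication (an S-ring of rank 5), and the
left stabilizers of `X3` and of `X4` are trivial. -/
theorem sring_of_hyperplane_ordering
    (p e q r l : ℕ) (hp : p.Prime) (he : 1 ≤ e) (hq : q = p ^ e) (hr : 2 ≤ r)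
    (hl : l = (q ^ r - 1) / (q - 1)) (hlpos : 0 < l)
    (K F : Type*) [Field K] [Field F] [Algebra K F] [Fintype K] [Fintype F]
    [DecidableEq F]
    (hcardK : Fintype.card K = q) (hcardF : Fintype.card F = q ^ r)
    (hrank : Module.finrank K F = r)
    (σ : Fˣ) (hσ : ∀ u : Fˣ, u ∈ Subgroup.zpowers σ)
    (τ : Fˣ) (hτ : τ = σ ^ (q - 1))
    (G : Type*) [Group G] [Fintype G]
    (ι : F → G) (hι : ∀ x y : F, ι (x + y) = ι x * ι y)
    (hinj : Function.Injective ι)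
    (t : G) (hconj : ∀ x : F, t * ι x * t⁻¹ = ι ((τ : F) * x))
    (horder : orderOf t = l)
    (hcardG : Fintype.card G = q ^ r * l)
    (hdecomp : ∀ g : G, ∃ (x : F) (i : ℕ), i < l ∧ g = ι x * t ^ i)
    (A : Fin l → Submodule K F)
    (hA : ∀ i, Module.finrank K (A i) = r - 1)
    (hAinj : Function.Injective A)
    (hAall : ∀ W : Submodule K F, Module.finrank K W = r - 1 → ∃ i, A i = W)
    (X1 X2 X3 X4 S : Set G)
    (hX1 : X1 = ι '' ((A ⟨0, hlpos⟩ : Set F) \ {0}))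
    (hX2 : X2 = ι '' ((Set.univ : Set F) \ (A ⟨0, hlpos⟩ : Set F)))
    (hX3 : X3 = {g : G | ∃ i : Fin l, (i : ℕ) ≠ 0 ∧
      ∃ y ∈ (A i : Set F), g = ι y * t ^ (i : ℕ)})
    (hX4 : X4 = {g : G | ∃ i : Fin l, (i : ℕ) ≠ 0 ∧
      ∃ y ∈ ((Set.univ : Set F) \ (A i : Set F)), g = ι y * t ^ (i : ℕ)})
    (hS : S = {g : G | ∃ i : Fin l,
      ∃ y ∈ ((Set.univ : Set F) \ (A i : Set F)), g = ι y * t ^ (i : ℕ)})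
    (hSinv : S⁻¹ = S) :
    ({(1 : G)} : Set G)⁻¹ = {(1 : G)} ∧ X1⁻¹ = X1 ∧ X2⁻¹ = X2 ∧ X3⁻¹ = X3 ∧ X4⁻¹ = X4 ∧
    (∀ a b : MonoidAlgebra ℤ G,
      a ∈ Submodule.span ℤ ({underline {(1 : G)}, underline X1, underline X2,
        underline X3, underline X4} : Set (MonoidAlgebra ℤ G)) →
      b ∈ Submodule.span ℤ ({underline {(1 : G)}, underline X1, underline X2,
        underline X3, underline X4} : Set (MonoidAlgebra ℤ G)) →
      a * b ∈ Submodule.span ℤ ({underline {(1 : G)}, underline X1, underline X2,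
        underline X3, underline X4} : Set (MonoidAlgebra ℤ G))) ∧
    {g : G | (fun x => g * x) '' X3 = X3} = {(1 : G)} ∧
    {g : G | (fun x => g * x) '' X4 = X4} = {(1 : G)} := by
  subst hX1 hX2 hS
  have : NeZero l := ⟨hlpos.ne'⟩
  have hz : (⟨0, hlpos⟩ : Fin l) = 0 := rfl
  simp only [hz]
  have hι0 : ι 0 = 1 := by
    have := hι 0 0
    rw [add_zero] at this
    exact (left_eq_mul.1 this)
  have hιneg : ∀ x, ι (-x) = (ι x)⁻¹ := by
    intro x
    rw [eq_inv_iff_mul_eq_one, ← hι, neg_add_cancel, hι0]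
  have hti : ∀ (i : ℕ) (x : F), t ^ i * ι x = ι (((τ ^ i : Fˣ) : F) * x) * t ^ i := by
    intro i
    induction i with
    | zero => intro x; simp
    | succ n ih =>
      intro x
      have h1 : ∀ y, t * ι y = ι ((τ : F) * y) * t := fun y => by
        rw [← hconj, inv_mul_cancel_right]
      rw [pow_succ' t, mul_assoc, ih, ← mul_assoc, h1, mul_assoc]
      congr 2
      push_cast
      ring
  have hbij : Function.Bijective (fun p : F × Fin l => ι p.1 * t ^ (p.2 : ℕ)) := by
    rw [Fintype.bijective_iff_surjective_and_card]
    refine ⟨fun g => ?_, by simp [hcardG, hcardF]⟩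
    obtain ⟨x, i, hi, rfl⟩ := hdecomp g
    exact ⟨(x, ⟨i, hi⟩), rfl⟩
  have huniq : ∀ (x y : F) (i j : Fin l), ι x * t ^ (i : ℕ) = ι y * t ^ (j : ℕ) →
      x = y ∧ i = j := by
    intro x y i j h
    have := @hbij.1 (x, i) (y, j) h
    simpa using this
  have hd : ∀ g : G, ∃ (x : F) (i : Fin l), g = ι x * t ^ (i : ℕ) := by
    intro g
    obtain ⟨x, i, hi, rfl⟩ := hdecomp g
    exact ⟨x, ⟨i, hi⟩, rfl⟩
  have hneg : ∀ i : Fin l, t ^ ((-i : Fin l) : ℕ) = (t ^ (i : ℕ))⁻¹ := by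
    intro i
    have hmod : ∀ n : ℕ, t ^ (n % l) = t ^ n := by
      intro n
      have := pow_mod_orderOf t n
      rwa [horder] at this
    have htl : t ^ l = 1 := by
      have := pow_orderOf_eq_one t
      rwa [horder] at this
    rw [eq_inv_iff_mul_eq_one, Fin.val_neg', hmod, ← pow_add, Nat.sub_add_cancel i.2.le, htl]
  have hinv : ∀ (x : F) (i : Fin l), (ι x * t ^ (i : ℕ))⁻¹ =
      ι (-(((τ ^ ((-i : Fin l) : ℕ) : Fˣ) : F) * x)) * t ^ ((-i : Fin l) : ℕ) := by
    intro x i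
    rw [mul_inv_rev, ← hιneg, ← hneg, hti, mul_neg]
  -- membership lemmas
  have m0 : ∀ (x : F) (i : Fin l), ι x * t ^ (i : ℕ) ∈ ({1} : Set G) ↔ i = 0 ∧ x = 0 := by
    intro x i
    rw [Set.mem_singleton_iff]
    constructor
    · intro h
      have := huniq x 0 i 0 (by rw [h, hι0]; simp)
      exact this.symm
    · rintro ⟨rfl, rfl⟩; simp [hι0]
  have mimg : ∀ (B : Set F) (x : F) (i : Fin l), ι x * t ^ (i : ℕ) ∈ ι '' B ↔ i = 0 ∧ x ∈ B := by
    intro B x i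
    constructor
    · rintro ⟨y, hy, h⟩
      obtain ⟨rfl, rfl⟩ := huniq y x 0 i (by rw [← h]; simp)
      exact ⟨rfl, hy⟩
    · rintro ⟨rfl, h⟩; exact ⟨x, h, by simp⟩
  have hv : ∀ i : Fin l, (i : ℕ) ≠ 0 ↔ i ≠ 0 := by
    intro i; rw [Ne, Ne, Fin.ext_iff]; rfl
  have m3 : ∀ (x : F) (i : Fin l), ι x * t ^ (i : ℕ) ∈ X3 ↔ i ≠ 0 ∧ x ∈ A i := by
    intro x i
    rw [hX3]
    constructor
    · rintro ⟨j, hj, y, hy, h⟩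
      obtain ⟨rfl, rfl⟩ := huniq _ _ _ _ h
      exact ⟨(hv _).1 hj, hy⟩
    · rintro ⟨h1, h2⟩; exact ⟨i, (hv _).2 h1, x, h2, rfl⟩
  have m4 : ∀ (x : F) (i : Fin l), ι x * t ^ (i : ℕ) ∈ X4 ↔ i ≠ 0 ∧ x ∉ A i := by
    intro x i
    rw [hX4]
    constructor
    · rintro ⟨j, hj, y, hy, h⟩
      obtain ⟨rfl, rfl⟩ := huniq _ _ _ _ h
      exact ⟨(hv _).1 hj, hy.2⟩
    · rintro ⟨h1, h2⟩; exact ⟨i, (hv _).2 h1, x, ⟨trivial, h2⟩, rfl⟩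
  have hflip' : ∀ (i : Fin l) (x : F),
      ((τ ^ ((-i : Fin l) : ℕ) : Fˣ) : F) * x ∈ A (-i) ↔ x ∈ A i := by
    intro i x
    have mS : ∀ (x : F) (i : Fin l), ι x * t ^ (i : ℕ) ∈ {g : G | ∃ i : Fin l,
      ∃ y ∈ ((Set.univ : Set F) \ (A i : Set F)), g = ι y * t ^ (i : ℕ)} ↔ x ∉ A i := by
      intro x i
      constructor
      · rintro ⟨j, y, hy, h⟩
        obtain ⟨rfl, rfl⟩ := huniq _ _ _ _ h
        exact hy.2
      · intro h2; exact ⟨i, x, ⟨trivial, h2⟩, rfl⟩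
    have h1 := mS x i
    rw [← hSinv, Set.mem_inv, hinv, mS, neg_mem_iff] at h1
    exact not_iff_not.1 h1
  have hflip : ∀ (i : Fin l) (x : F), x ∈ A (-i) ↔ ((τ ^ (i : ℕ) : Fˣ) : F) * x ∈ A i := by
    intro i x
    have := hflip' (-i) x
    rw [neg_neg] at this
    exact this.symm
  -- inverse closure from membership
  have invc : ∀ X : Set G, (∀ g ∈ X, g⁻¹ ∈ X) → X⁻¹ = X := by
    intro X h
    ext g
    rw [Set.mem_inv]
    exact ⟨fun hg => by simpa using h _ hg, h g⟩
  have inv1 : (ι '' ((A 0 : Set F) \ {0}))⁻¹ = ι '' ((A 0 : Set F) \ {0}) := by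
    apply invc
    rintro _ ⟨x, ⟨hx, hx0⟩, rfl⟩
    exact ⟨-x, ⟨neg_mem (S := Submodule K F) hx, by simpa using hx0⟩, hιneg x⟩
  have inv2 : (ι '' ((Set.univ : Set F) \ (A 0 : Set F)))⁻¹ =
      ι '' ((Set.univ : Set F) \ (A 0 : Set F)) := by
    apply invc
    rintro _ ⟨x, ⟨hx, hx0⟩, rfl⟩
    exact ⟨-x, ⟨trivial, by simpa using hx0⟩, hιneg x⟩
  have inv3 : X3⁻¹ = X3 := by
    apply invc
    intro g hg
    obtain ⟨x, i, rfl⟩ := hd g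
    rw [m3] at hg
    rw [hinv, m3, neg_mem_iff, hflip']
    exact ⟨neg_ne_zero.2 hg.1, hg.2⟩
  have inv4 : X4⁻¹ = X4 := by
    apply invc
    intro g hg
    obtain ⟨x, i, rfl⟩ := hd g
    rw [m4] at hg
    rw [hinv, m4, neg_mem_iff, hflip']
    exact ⟨neg_ne_zero.2 hg.1, hg.2⟩
  -- hyperplane geometry
  have hscale : ∀ u : Fˣ, ∃ π : Fin l → Fin l, Function.Bijective π ∧
      ∀ i x, x ∈ A (π i) ↔ (u : F) * x ∈ A i := by
    intro u
    let f : F ≃ₗ[K] F := DistribMulAction.toLinearEquiv K F u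
    have hf : ∀ x, f x = (u : F) * x := fun x => rfl
    have h1 : ∀ i, ∃ j, A j = (A i).map (f.symm : F →ₗ[K] F) := by
      intro i
      apply hAall
      rw [LinearEquiv.finrank_map_eq, hA]
    choose π hπ using h1
    have hm : ∀ i x, x ∈ A (π i) ↔ (u : F) * x ∈ A i := by
      intro i x
      rw [hπ, ← hf]
      constructor
      · rintro ⟨y, hy, rfl⟩
        simpa using hy
      · intro h; exact ⟨f x, h, by simp⟩
    refine ⟨π, Finite.injective_iff_bijective.1 fun i j hij => hAinj ?_, hm⟩
    ext x
    have h2 := hm i ((u⁻¹ : Fˣ) * x)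
    have h3 := hm j ((u⁻¹ : Fˣ) * x)
    rw [Units.mul_inv_cancel_left] at h2 h3
    rw [← h2, ← h3, hij]
  have hN : ∀ x : F, x ≠ 0 → (Finset.univ.filter (fun i => x ∈ A i)).card =
      (Finset.univ.filter (fun i => (1 : F) ∈ A i)).card := by
    intro x hx
    obtain ⟨π, hπ, hm⟩ := hscale (Units.mk0 x hx)
    refine Finset.card_bij (fun i _ => π i) ?_ ?_ ?_
    · intro i hi
      simp only [Finset.mem_filter, Finset.mem_univ, true_and] at hi ⊢
      rw [hm]; simpa using hi
    · intro i _ j _ h; exact hπ.1 h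
    · intro j hj
      obtain ⟨i, rfl⟩ := hπ.2 j
      simp only [Finset.mem_filter, Finset.mem_univ, true_and] at hj ⊢
      rw [hm] at hj
      exact ⟨i, by simpa using hj, rfl⟩
  have hcard : ∀ i, Fintype.card (A i) = q ^ (r - 1) := by
    intro i
    rw [Module.card_eq_pow_finrank (K := K), hA, hcardK]
  have hsup : ∀ i j, i ≠ j → A i ⊔ A j = ⊤ := by
    intro i j hij
    have hlt : A i < A i ⊔ A j := by
      rw [left_lt_sup]
      intro hle
      exact hij (hAinj (Submodule.eq_of_le_of_finrank_eq hle (by rw [hA, hA])).symm)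
    have h1 := Submodule.finrank_lt_finrank_of_lt hlt
    have h2 := Submodule.finrank_le (A i ⊔ A j)
    apply Submodule.eq_top_of_finrank_eq
    rw [hA] at h1
    omega
  have hprod : ∀ i j, i ≠ j →
      aS ι (A i) * aS ι (A j) = (q ^ (r - 2)) • aS ι (⊤ : Submodule K F) := by
    intro i j hij
    apply aS_mul_of_sup ι hι _ _ (hsup i j hij)
    rw [hcard, hcard, hcardF, ← pow_add, ← pow_add]
    congr 1
    omega
  -- separation
  have hmiss : ∀ y : F, y ≠ 0 → ∃ j, y ∉ A j := by
    intro y hy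
    have : ∃ w, w ∉ A 0 := by
      by_contra! h
      have h1 : A 0 = ⊤ := by ext; simp [h]
      have h2 := hA 0
      rw [h1, finrank_top] at h2
      omega
    obtain ⟨w, hw⟩ := this
    have hw0 : w ≠ 0 := by rintro rfl; exact hw (zero_mem _)
    obtain ⟨π, hπ, hm⟩ := hscale (Units.mk0 (w / y) (div_ne_zero hw0 hy))
    refine ⟨π 0, ?_⟩
    rw [hm]
    simpa [div_mul_cancel₀ _ hy] using hw
  have hsep : ∀ y : F, (∀ j : Fin l, j ≠ 0 → y ∈ A j) → y = 0 := by
    intro y hy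
    by_contra hy0
    obtain ⟨j, hj⟩ := hmiss y hy0
    have hj0 : j = 0 := by
      by_contra h; exact hj (hy j h)
    subst hj0
    have : ∃ z ∈ A 0, z ≠ 0 := by
      apply Submodule.exists_mem_ne_zero_of_ne_bot
      intro h1
      have h2 := hA 0
      rw [h1, finrank_bot] at h2
      omega
    obtain ⟨z, hz0, hzne⟩ := this
    obtain ⟨j, hjz⟩ := hmiss z hzne
    have hj0 : j ≠ 0 := by rintro rfl; exact hjz hz0
    have hyz0 : y + z ∉ A 0 := fun h => hj ((Submodule.add_mem_iff_left _ hz0).1 h)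
    have hyzj : y + z ∉ A j := fun h => hjz ((Submodule.add_mem_iff_right _ (hy j hj0)).1 h)
    have hyz : y + z ≠ 0 := fun h => hyz0 (h ▸ zero_mem _)
    obtain ⟨π, hπ, hm⟩ := hscale (Units.mk0 ((y + z) / y) (div_ne_zero hyz hy0))
    have k : ∀ i, y + z ∉ A i → π i = 0 := by
      intro i hi
      by_contra h
      have := (hm i y).1 (hy _ h)
      apply hi
      simpa [div_mul_cancel₀ _ hy0] using this
    exact hj0 (hπ.1 ((k j hyzj).trans (k 0 hyz0).symm))
  have hone : ∃ i : Fin l, i ≠ 0 := by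
    by_contra! h
    have := hsep 1 (fun j hj => absurd (h j) hj)
    exact one_ne_zero this
  have hne : ∀ i, ∃ x, x ∉ A i := by
    intro i
    by_contra! h
    have h1 : A i = ⊤ := by ext; simp [h]
    have h2 := hA i
    rw [h1, finrank_top] at h2
    omega
  have stab : ∀ (X : Set G), (∀ x : F, ι x ∉ X) →
      (∀ i : Fin l, i ≠ 0 → ∃ x, ι x * t ^ (i : ℕ) ∈ X) →
      (∀ y : F, (∀ (x : F) (i : Fin l), ι x * t ^ (i : ℕ) ∈ X → ι (y + x) * t ^ (i : ℕ) ∈ X) →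
        ∀ j : Fin l, j ≠ 0 → y ∈ A j) →
      {g : G | (fun x => g * x) '' X = X} = {(1 : G)} := by
    intro X hX0 hXi hXy
    ext g
    simp only [Set.mem_ofPred_eq, Set.mem_singleton_iff]
    constructor
    · intro hg
      have hg' : ∀ h ∈ X, g * h ∈ X := fun h hh => by
        rw [← hg]; exact ⟨h, hh, rfl⟩
      obtain ⟨y, i, rfl⟩ := hd g
      by_cases hi : i = 0
      · subst hi
        have := hsep y (hXy y (fun x i hx => by
          have := hg' _ hx
          simpa [hι, mul_assoc] using this))
        subst this
        simp [hι0]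
      · exfalso
        obtain ⟨x, hx⟩ := hXi (-i) (neg_ne_zero.2 hi)
        have h1 := hg' _ hx
        rw [mul_assoc, ← mul_assoc (t ^ (i : ℕ)), hti, hneg, mul_inv_cancel_right, ← hι] at h1
        exact hX0 _ h1
    · rintro rfl; simp
  have st3 : {g : G | (fun x => g * x) '' X3 = X3} = {(1 : G)} := by
    apply stab
    · intro x hx
      have := (m3 x 0).1 (by simpa using hx)
      exact this.1 rfl
    · intro i hi; exact ⟨0, (m3 _ _).2 ⟨hi, zero_mem _⟩⟩
    · intro y h j hj
      have := (m3 _ _).1 (h 0 j ((m3 _ _).2 ⟨hj, zero_mem _⟩))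
      simpa using this.2
  have st4 : {g : G | (fun x => g * x) '' X4 = X4} = {(1 : G)} := by
    apply stab
    · intro x hx
      have := (m4 x 0).1 (by simpa using hx)
      exact this.1 rfl
    · intro i hi
      obtain ⟨x, hx⟩ := hne i
      exact ⟨x, (m4 _ _).2 ⟨hi, hx⟩⟩
    · intro y h j hj
      by_contra hyj
      have := (m4 _ _).1 (h (-y) j ((m4 _ _).2 ⟨hj, by simpa using hyj⟩))
      exact this.2 (by simp)
  refine ⟨by simp, inv1, inv2, inv3, inv4, ?_, st3, st4⟩
  -- the S-ring
  set D := ∑ i : Fin l, aS ι (A i) * bT (t ^ (i : ℕ)) with hD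
  have hre : ∀ f : G → MonoidAlgebra ℤ G,
      ∑ g : G, f g = ∑ i : Fin l, ∑ x : F, f (ι x * t ^ (i : ℕ)) := by
    intro f
    rw [← hbij.sum_comp, Fintype.sum_prod_type, Finset.sum_comm]
  have hu : ∀ (Y : Set G) (B : Fin l → F → Prop)
      (_ : ∀ (x : F) (i : Fin l), ι x * t ^ (i : ℕ) ∈ Y ↔ B i x),
      underline Y = ∑ i : Fin l, ∑ x : F, if B i x then bT (ι x * t ^ (i : ℕ)) else 0 := by
    intro Y B hB
    rw [underline_eq, hre]
    simp_rw [hB]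
  have u0 : underline ({1} : Set G) = 1 := by
    rw [underline_eq]; simp [bT_one]
  have hAsum : aS ι (A 0) = ∑ i : Fin l, ∑ x : F,
      if i = 0 ∧ x ∈ A 0 then bT (ι x * t ^ (i : ℕ)) else 0 := by
    rw [aS_eq, Fintype.sum_eq_single (0 : Fin l)]
    · simp
    · intro i hi; simp [hi]
  have hFsum : aS ι (⊤ : Submodule K F) = ∑ i : Fin l, ∑ x : F,
      if i = 0 then bT (ι x * t ^ (i : ℕ)) else 0 := by
    rw [aS_eq, Fintype.sum_eq_single (0 : Fin l)]
    · simp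
    · intro i hi; simp [hi]
  have hDsum : D = ∑ i : Fin l, ∑ x : F, if x ∈ A i then bT (ι x * t ^ (i : ℕ)) else 0 := by
    rw [hD]
    refine Finset.sum_congr rfl fun i _ => ?_
    rw [aS_eq, Finset.sum_mul]
    simp_rw [ite_mul, zero_mul, bT_mul]
  have hGsum : ∑ g : G, bT g = ∑ i : Fin l, ∑ x : F, bT (ι x * t ^ (i : ℕ)) := hre _
  have r1 : aS ι (A 0) = underline {(1 : G)} + underline (ι '' ((A 0 : Set F) \ {0})) := by
    rw [hu _ _ m0, hu _ _ (mimg _), hAsum]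
    simp_rw [← Finset.sum_add_distrib]
    refine Finset.sum_congr rfl fun i _ => Finset.sum_congr rfl fun x _ => ?_
    by_cases h0 : i = 0
    · by_cases h1 : x = 0
      · simp [h0, h1]
      · by_cases h2 : x ∈ A 0 <;> simp [h0, h1, h2]
    · simp [h0]
  have r2 : aS ι (⊤ : Submodule K F) = aS ι (A 0) +
      underline (ι '' ((Set.univ : Set F) \ (A 0 : Set F))) := by
    rw [hu _ _ (mimg _), hAsum, hFsum]
    simp_rw [← Finset.sum_add_distrib]
    refine Finset.sum_congr rfl fun i _ => Finset.sum_congr rfl fun x _ => ?_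
    by_cases h0 : i = 0 <;> by_cases h2 : x ∈ A 0 <;> simp [h0, h2]
  have r3 : D = aS ι (A 0) + underline X3 := by
    rw [hu _ _ m3, hAsum, hDsum]
    simp_rw [← Finset.sum_add_distrib]
    refine Finset.sum_congr rfl fun i _ => Finset.sum_congr rfl fun x _ => ?_
    by_cases h0 : i = 0
    · subst h0; simp
    · simp [h0]
  have r4 : ∑ g : G, bT g = aS ι (⊤ : Submodule K F) + underline X3 + underline X4 := by
    rw [hu _ _ m3, hu _ _ m4, hFsum, hGsum]
    simp_rw [← Finset.sum_add_distrib]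
    refine Finset.sum_congr rfl fun i _ => Finset.sum_congr rfl fun x _ => ?_
    by_cases h0 : i = 0
    · subst h0; simp
    · by_cases h2 : x ∈ A i <;> simp [h0, h2]
  set U1 := underline (ι '' ((A 0 : Set F) \ {0}))
  set U2 := underline (ι '' ((Set.univ : Set F) \ (A 0 : Set F)))
  set U3 := underline X3
  set U4 := underline X4
  rw [u0] at r1 ⊢
  set P := Submodule.span ℤ ({1, U1, U2, U3, U4} : Set (MonoidAlgebra ℤ G)) with hP
  have p0 : 1 ∈ P := Submodule.subset_span (by simp)
  have p1 : U1 ∈ P := Submodule.subset_span (by simp)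
  have p2 : U2 ∈ P := Submodule.subset_span (by simp)
  have p3 : U3 ∈ P := Submodule.subset_span (by simp)
  have p4 : U4 ∈ P := Submodule.subset_span (by simp)
  have q1 : aS ι (A 0) ∈ P := r1 ▸ P.add_mem p0 p1
  have q2 : aS ι (⊤ : Submodule K F) ∈ P := r2 ▸ P.add_mem q1 p2
  have q3 : D ∈ P := r3 ▸ P.add_mem q1 p3
  have q4 : ∑ g : G, bT g ∈ P := r4 ▸ P.add_mem (P.add_mem q2 p3) p4
  have key := core_mul ι hι t τ hti hbij hneg A (q ^ (r - 1)) (q ^ (r - 2)) hcard hprod hflip _ hN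
    D hD P p0 q1 q2 q3 q4
  set Bs : Set (MonoidAlgebra ℤ G) :=
    {1, aS ι (A 0), aS ι (⊤ : Submodule K F), D, ∑ g : G, bT g} with hBs
  have b0 : 1 ∈ Submodule.span ℤ Bs := Submodule.subset_span (by simp [hBs])
  have b1 : aS ι (A 0) ∈ Submodule.span ℤ Bs := Submodule.subset_span (by simp [hBs])
  have b2 : aS ι (⊤ : Submodule K F) ∈ Submodule.span ℤ Bs :=
    Submodule.subset_span (by simp [hBs])
  have b3 : D ∈ Submodule.span ℤ Bs := Submodule.subset_span (by simp [hBs])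
  have b4 : ∑ g : G, bT g ∈ Submodule.span ℤ Bs := Submodule.subset_span (by simp [hBs])
  have hPB : P ≤ Submodule.span ℤ Bs := by
    rw [hP, Submodule.span_le]
    have c1 : U1 ∈ Submodule.span ℤ Bs := by
      rw [← sub_eq_iff_eq_add'.2 r1]
      exact Submodule.sub_mem _ b1 b0
    have c2 : U2 ∈ Submodule.span ℤ Bs := by
      rw [← sub_eq_iff_eq_add'.2 r2]
      exact Submodule.sub_mem _ b2 b1
    have c3 : U3 ∈ Submodule.span ℤ Bs := by
      rw [← sub_eq_iff_eq_add'.2 r3]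
      exact Submodule.sub_mem _ b3 b1
    have c4 : U4 ∈ Submodule.span ℤ Bs := by
      rw [← sub_eq_iff_eq_add'.2 r4]
      exact Submodule.sub_mem _ b4 (Submodule.add_mem _ b2 c3)
    rintro x (rfl | rfl | rfl | rfl | rfl) <;> assumption
  intro a b ha hb
  have hab := Submodule.mul_mem_mul (hPB ha) (hPB hb)
  rw [Submodule.span_mul_span] at hab
  refine Submodule.span_le.2 ?_ hab
  rintro _ ⟨x, hx, y, hy, rfl⟩
  exact key x hx y hy
end

section
/- In the semidirect-product setup G = F ⋊ ⟨τ⟩ with subsets X2, X3 ⊆ G built from an ordering A_0, ..., A_{l−1} of the F_q-hyperplanes of F such that S = ⋃_{i=0}^{l−1}(F\A_i)τ^i is inverse-closed in G, the set D = X2 ∪ X3 is a reversible identity-free divisible difference set in G relative to the subgroup F with parameters m = l = (q^r−1)/(q−1), n = q^r, k = q^{r−1}(l + q − 2), λ1 = q^{r−1}(q−1) + q^r(q^{r−2}−1)/(q−1), λ2 = q^{r−2}(2q + l − 4); equivalently, Cay(G, X2 ∪ X3) is a divisible design graph with parameters (q^r·l, k, λ1, λ2, l, q^r) whose canonical partition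 is into the cosets of F in G. Moreover λ1 = λ2 if and only if q = 3. -/
open Classical

namespace DDG

lemma pow_val_add {M : Type*} [Monoid M] {l : ℕ} [NeZero l] (a : M) (ha : a ^ l = 1)
    (i j : ZMod l) : a ^ (i + j).val = a ^ i.val * a ^ j.val := by
  rw [ZMod.val_add, ← pow_add, ← pow_eq_pow_mod _ ha]

lemma pow_val_neg {M : Type*} [Group M] {l : ℕ} [NeZero l] (a : M) (ha : a ^ l = 1)
    (i : ZMod l) : a ^ (-i).val = (a ^ i.val)⁻¹ := by
  rw [eq_inv_iff_mul_eq_one, ← pow_val_add a ha]; simp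

lemma pow_val_sub {M : Type*} [Group M] {l : ℕ} [NeZero l] (a : M) (ha : a ^ l = 1)
    (i j : ZMod l) : a ^ (i - j).val = a ^ i.val * (a ^ j.val)⁻¹ := by
  rw [sub_eq_add_neg, pow_val_add a ha, pow_val_neg a ha]

section count
variable {K F : Type*} [Field K] [Field F] [Algebra K F] [Fintype K] [Fintype F]

lemma card_sub (q n : ℕ) (hcardK : Fintype.card K = q) (U : Submodule K F)
    (hU : Module.finrank K U = n) : (Finset.univ.filter (fun x : F => x ∈ U)).card = q ^ n := by
  rw [← hU, ← hcardK, ← Module.card_eq_pow_finrank (K := K) (V := U), Fintype.card_subtype]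

lemma card_shift (q n : ℕ) (hcardK : Fintype.card K = q) (U : Submodule K F)
    (hU : Module.finrank K U = n) (z : F) :
    (Finset.univ.filter (fun x : F => x - z ∈ U)).card = q ^ n := by
  rw [← card_sub q n hcardK U hU]
  refine Finset.card_bij (fun x _ => x - z) (by simp) (by simp) ?_
  intro b hb
  exact ⟨b + z, by simpa using hb, by simp⟩

lemma card_inter (q r : ℕ) (hr : 2 ≤ r) (hcardK : Fintype.card K = q)
    (hrank : Module.finrank K F = r) (U V : Submodule K F)
    (hU : Module.finrank K U = r - 1) (hV : Module.finrank K V = r - 1) (hne : U ≠ V) (z : F) :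
    (Finset.univ.filter (fun x : F => x ∈ U ∧ x - z ∈ V)).card = q ^ (r - 2) := by
  have h1 := Submodule.finrank_sup_add_finrank_inf_eq U V
  have hlt : U < U ⊔ V := by
    refine lt_of_le_of_ne le_sup_left ?_
    intro h
    have hVU : V ≤ U := by rw [h]; exact le_sup_right
    exact hne (Submodule.eq_of_le_of_finrank_eq hVU (by rw [hU, hV])).symm
  have h2 := Submodule.finrank_lt_finrank_of_lt hlt
  have h3 := Submodule.finrank_le (U ⊔ V)
  have htop : U ⊔ V = ⊤ := Submodule.eq_top_of_finrank_eq (by omega)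
  have hi : Module.finrank K (U ⊓ V : Submodule K F) = r - 2 := by omega
  rw [← card_sub q (r - 2) hcardK _ hi]
  have hz : z ∈ U ⊔ V := by rw [htop]; trivial
  obtain ⟨u, hu, v, hv, huv⟩ := Submodule.mem_sup.1 hz
  subst huv
  refine Finset.card_bij (fun x _ => x - u) ?_ (by simp) ?_
  · intro x hx
    simp only [Finset.mem_filter, Finset.mem_univ, true_and, Submodule.mem_inf] at hx ⊢
    refine ⟨U.sub_mem hx.1 hu, ?_⟩
    have := V.add_mem hx.2 hv
    convert this using 1; ring
  · intro b hb
    simp only [Finset.mem_filter, Finset.mem_univ, true_and, Submodule.mem_inf] at hb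
    refine ⟨b + u, ?_, by simp⟩
    simp only [Finset.mem_filter, Finset.mem_univ, true_and]
    refine ⟨U.add_mem hb.1 hu, ?_⟩
    have := V.sub_mem hb.2 hv
    convert this using 1; ring

/-- `#(X ∧ ¬ Y) + #(X ∧ Y) = #X`. -/
lemma card_not (X Y : F → Prop) [DecidablePred X] [DecidablePred Y] :
    (Finset.univ.filter (fun x : F => X x ∧ ¬ Y x)).card +
    (Finset.univ.filter (fun x : F => X x ∧ Y x)).card = (Finset.univ.filter X).card := by
  rw [add_comm, ← Finset.card_filter_add_card_filter_not (s := Finset.univ.filter X) Y,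
    Finset.filter_filter, Finset.filter_filter]

lemma card_hyp (q r l : ℕ) [NeZero l] (hr : 2 ≤ r) (hcardK : Fintype.card K = q)
    (hcardF : Fintype.card F = q ^ r) (hl : l * (q - 1) = q ^ r - 1) (hq : 2 ≤ q)
    (B : ZMod l → Submodule K F) (hB : ∀ i, Module.finrank K (B i) = r - 1)
    (hBinj : Function.Injective B)
    (hBall : ∀ W : Submodule K F, Module.finrank K W = r - 1 → ∃ i, B i = W)
    (x : F) (hx : x ≠ 0) :
    (q - 1) * (Finset.univ.filter (fun i : ZMod l => x ∈ B i)).card = q ^ (r - 1) - 1 := by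
  set N : F → ℕ := fun x => (Finset.univ.filter (fun i : ZMod l => x ∈ B i)).card with hN
  have hle : ∀ y z : F, y ≠ 0 → z ≠ 0 → N y ≤ N z := by
    intro y z hy hz
    let u : Fˣ := Units.mk0 (z / y) (div_ne_zero hz hy)
    let e : F ≃ₗ[K] F := DistribMulAction.toLinearEquiv K F u
    have hex : ∀ i, ∃ j, B j = (B i).map (e : F →ₗ[K] F) := by
      intro i
      apply hBall
      rw [← hB i]; exact LinearEquiv.finrank_map_eq e (B i)
    choose f hf using hex
    refine Finset.card_le_card_of_injOn f ?_ ?_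
    · intro i hi
      simp only [Finset.coe_filter, Finset.mem_univ, true_and, Set.mem_ofPred_eq] at hi ⊢
      rw [hf]
      refine ⟨y, hi, ?_⟩
      change (z / y) * y = z
      field_simp
    · intro i _ j _ hij
      apply hBinj
      have : (B i).map (e : F →ₗ[K] F) = (B j).map (e : F →ₗ[K] F) := by rw [← hf, ← hf, hij]
      exact Submodule.map_injective_of_injective e.injective this
  have hconst : ∀ y ∈ (Finset.univ.erase (0 : F)), N y = N x := by
    intro y hy
    have hy := Finset.ne_of_mem_erase hy
    exact le_antisymm (hle _ _ hy hx) (hle _ _ hx hy)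
  have h1 : ∑ y ∈ Finset.univ.erase (0 : F), N y = (q ^ r - 1) * N x := by
    rw [Finset.sum_congr rfl hconst]
    simp [Finset.card_erase_of_mem, hcardF]
  have h2 : ∑ y ∈ Finset.univ.erase (0 : F), N y = l * (q ^ (r - 1) - 1) := by
    simp only [hN, Finset.card_filter]
    rw [Finset.sum_comm]
    have : ∀ i : ZMod l, (∑ y ∈ Finset.univ.erase (0 : F), if y ∈ B i then 1 else 0)
        = q ^ (r - 1) - 1 := by
      intro i
      rw [← card_sub q (r - 1) hcardK (B i) (hB i), ← Finset.card_filter,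
        Finset.filter_erase, Finset.card_erase_of_mem (by simp)]
    simp [this, ZMod.card]
  have hlpos : 0 < l := Nat.pos_of_ne_zero (NeZero.ne l)
  apply Nat.eq_of_mul_eq_mul_left hlpos
  rw [← h2, h1, ← hl]; ring

/-- membership predicate of `D` in layer `i`. -/
def P {l : ℕ} (B : ZMod l → Submodule K F) (i : ZMod l) (x : F) : Prop :=
  if i = 0 then x ∉ B i else x ∈ B i

lemma card_P (q r l : ℕ) [NeZero l] (hcardK : Fintype.card K = q)
    (hcardF : Fintype.card F = q ^ r) (hl3 : 3 ≤ l) (hr : 2 ≤ r) (hq : 2 ≤ q)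
    (B : ZMod l → Submodule K F) (hB : ∀ i, Module.finrank K (B i) = r - 1) :
    ∑ i, (Finset.univ.filter (fun x : F => P B i x)).card = q ^ (r - 1) * (l + q - 2) := by
  rw [← Finset.add_sum_erase _ _ (Finset.mem_univ (0 : ZMod l))]
  have h0 : (Finset.univ.filter (fun x : F => P B 0 x)).card + q ^ (r - 1) = q ^ r := by
    have := card_not (F := F) (fun _ => True) (fun x => x ∈ B 0)
    simp only [true_and, card_sub q (r - 1) hcardK (B 0) (hB 0)] at this
    simpa [P, hcardF] using this
  have h1 : ∀ i ∈ Finset.univ.erase (0 : ZMod l),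
      (Finset.univ.filter (fun x : F => P B i x)).card = q ^ (r - 1) := by
    intro i hi
    have hi := Finset.ne_of_mem_erase hi
    simp only [P, hi, if_false]
    exact card_sub q (r - 1) hcardK (B i) (hB i)
  rw [Finset.sum_congr rfl h1]
  simp only [Finset.sum_const, Finset.card_erase_of_mem (Finset.mem_univ (0 : ZMod l)),
    Finset.card_univ, ZMod.card, smul_eq_mul]
  obtain ⟨r, rfl⟩ := Nat.exists_eq_add_of_le' hr
  obtain ⟨l, rfl⟩ := Nat.exists_eq_add_of_le' hl3
  have e1 : l + 3 - 1 = l + 2 := rfl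
  have e2 : l + 3 + q - 2 = l + 1 + q := by omega
  have e3 : r + 2 - 1 = r + 1 := rfl
  rw [e3, pow_succ q (r+1)] at h0
  rw [e1, e2, e3]
  nlinarith

lemma card_same (q r l : ℕ) [NeZero l] (hr : 2 ≤ r) (hcardK : Fintype.card K = q)
    (hcardF : Fintype.card F = q ^ r) (hl : l * (q - 1) = q ^ r - 1) (hq : 2 ≤ q)
    (B : ZMod l → Submodule K F) (hB : ∀ i, Module.finrank K (B i) = r - 1)
    (hBinj : Function.Injective B)
    (hBall : ∀ W : Submodule K F, Module.finrank K W = r - 1 → ∃ i, B i = W)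
    (z : F) (hz : z ≠ 0) :
    ∑ i, (Finset.univ.filter (fun x : F => P B i x ∧ P B i (x - z))).card
      = q ^ (r - 1) * (q - 1) + q ^ r * ((q ^ (r - 2) - 1) / (q - 1)) := by
  have hN := card_hyp q r l hr hcardK hcardF hl hq B hB hBinj hBall z hz
  -- generic layer
  have hU : ∀ i, (Finset.univ.filter (fun x : F => x ∈ B i ∧ x - z ∈ B i)).card
      = if z ∈ B i then q ^ (r - 1) else 0 := by
    intro i
    split_ifs with h
    · rw [← card_sub q (r - 1) hcardK (B i) (hB i)]
      congr 1; ext x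
      simp only [Finset.mem_filter, Finset.mem_univ, true_and, and_iff_left_iff_imp]
      exact fun hx => (B i).sub_mem hx h
    · rw [Finset.card_eq_zero, Finset.filter_eq_empty_iff]
      rintro x - ⟨h1, h2⟩
      apply h
      have := (B i).sub_mem h1 h2
      simpa using this
  have h0 : (Finset.univ.filter (fun x : F => P B 0 x ∧ P B 0 (x - z))).card + 2 * q ^ (r - 1)
      = q ^ r + if z ∈ B 0 then q ^ (r - 1) else 0 := by
    rw [← hU 0]
    have e1 := card_not (F := F) (fun x => x ∉ B 0) (fun x => x - z ∈ B 0)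
    have e2 := card_not (F := F) (fun x => x - z ∈ B 0) (fun x => x ∈ B 0)
    have e3 := card_not (F := F) (fun _ => True) (fun x => x ∈ B 0)
    simp only [true_and, card_sub q (r - 1) hcardK (B 0) (hB 0),
      card_shift q (r - 1) hcardK (B 0) (hB 0) z, Finset.filter_true, Finset.card_univ, hcardF]
      at e1 e2 e3
    have e4 : (Finset.univ.filter (fun x : F => P B 0 x ∧ P B 0 (x - z)))
        = Finset.univ.filter (fun x : F => x ∉ B 0 ∧ x - z ∉ B 0) := by
      ext x; simp [P]
    have e5 : (Finset.univ.filter (fun x : F => x - z ∈ B 0 ∧ x ∉ B 0))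
        = Finset.univ.filter (fun x : F => x ∉ B 0 ∧ x - z ∈ B 0) := by
      ext x; simp [and_comm]
    have e6 : (Finset.univ.filter (fun x : F => x - z ∈ B 0 ∧ x ∈ B 0))
        = Finset.univ.filter (fun x : F => x ∈ B 0 ∧ x - z ∈ B 0) := by
      ext x; simp [and_comm]
    rw [e5, e6] at e2
    rw [e4]
    omega
  have hl0 : 0 < l := Nat.pos_of_ne_zero (NeZero.ne l)
  have key : ∑ i, (Finset.univ.filter (fun x : F => P B i x ∧ P B i (x - z))).card
      + 2 * q ^ (r - 1) = q ^ r + ∑ i, if z ∈ B i then q ^ (r - 1) else 0 := by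
    rw [← Finset.add_sum_erase _ _ (Finset.mem_univ (0 : ZMod l)),
      ← Finset.add_sum_erase _ (fun i => if z ∈ B i then q ^ (r - 1) else 0)
        (Finset.mem_univ (0 : ZMod l))]
    have : ∀ i ∈ Finset.univ.erase (0 : ZMod l),
      (Finset.univ.filter (fun x : F => P B i x ∧ P B i (x - z))).card
        = if z ∈ B i then q ^ (r - 1) else 0 := by
      intro i hi
      have hi := Finset.ne_of_mem_erase hi
      rw [← hU i]
      simp only [P, hi, if_false]
    rw [Finset.sum_congr rfl this]
    omega
  rw [← Finset.sum_filter, Finset.sum_const, smul_eq_mul] at key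
  set n := (Finset.univ.filter (fun i : ZMod l => z ∈ B i)).card
  obtain ⟨r, rfl⟩ := Nat.exists_eq_add_of_le' hr
  obtain ⟨c, rfl⟩ := Nat.exists_eq_add_of_le' hq
  simp only [show r + 2 - 1 = r + 1 from rfl, show r + 2 - 2 = r from rfl,
    show c + 2 - 1 = c + 1 from rfl] at *
  obtain ⟨d, hd⟩ : (c + 1) ∣ (c + 2) ^ r - 1 := by
    simpa using Nat.sub_dvd_pow_sub_pow (c + 2) 1 r
  have hpos : 1 ≤ (c + 2) ^ r := Nat.one_le_pow _ _ (by omega)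
  rw [hd, Nat.mul_div_cancel_left _ (by omega)]
  have hd' : (c + 2) ^ r = (c + 1) * d + 1 := by omega
  have hn : n = (c + 2) * d + 1 := by
    apply Nat.eq_of_mul_eq_mul_left (show 0 < c + 1 by omega)
    rw [hN, pow_succ, hd']
    rw [Nat.sub_eq_iff_eq_add (by nlinarith)]
    ring
  rw [hn] at key
  rw [pow_succ (c+2) (r+1)] at *
  set Q := (c + 2) ^ (r + 1)
  nlinarith

lemma card_diff (q r l : ℕ) [NeZero l] (hr : 2 ≤ r) (hcardK : Fintype.card K = q)
    (hrank : Module.finrank K F = r) (hl3 : 3 ≤ l) (hq : 2 ≤ q)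
    (B : ZMod l → Submodule K F) (hB : ∀ i, Module.finrank K (B i) = r - 1)
    (hBinj : Function.Injective B) (τ : Fˣ) (hτ : τ ^ l = 1)
    (hrev : ∀ (i : ZMod l) (y : F), y ∈ B i ↔ ((τ ^ i.val)⁻¹ : Fˣ) * y ∈ B (-i))
    (s : ZMod l) (hs : s ≠ 0) (z : F) :
    ∑ i, (Finset.univ.filter
      (fun x : F => P B i x ∧ P B (i - s) (((τ ^ s.val)⁻¹ : Fˣ) * (x - z)))).card
      = q ^ (r - 2) * (2 * q + l - 4) := by
  let e : F ≃ₗ[K] F := DistribMulAction.toLinearEquiv K F (τ ^ s.val)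
  let C : ZMod l → Submodule K F := fun i => (B (i - s)).map (e : F →ₗ[K] F)
  have hC : ∀ (i : ZMod l) (x : F), ((τ ^ s.val)⁻¹ : Fˣ) * x ∈ B (i - s) ↔ x ∈ C i := by
    intro i x
    constructor
    · intro h
      refine ⟨_, h, ?_⟩
      change ((τ ^ s.val : Fˣ) : F) * (((τ ^ s.val)⁻¹ : Fˣ) * x) = x
      rw [Units.mul_inv_cancel_left]
    · rintro ⟨y, hy, rfl⟩
      change ((τ ^ s.val)⁻¹ : Fˣ) * (((τ ^ s.val : Fˣ) : F) * y) ∈ B (i - s)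
      rw [Units.inv_mul_cancel_left]; exact hy
  have hCr : ∀ i, Module.finrank K (C i) = r - 1 := by
    intro i
    rw [← hB (i - s)]; exact LinearEquiv.finrank_map_eq e _
  have hne : ∀ i, B i ≠ C i := by
    intro i h
    apply hs
    have h2 : B (-i) = B (s - i) := by
      ext w
      have a1 := hrev i ((τ ^ i.val : Fˣ) * w)
      rw [Units.inv_mul_cancel_left] at a1
      rw [← a1, h, ← hC, hrev (i - s), ← mul_assoc, ← mul_assoc, ← Units.val_mul, ← Units.val_mul,
        pow_val_sub τ hτ, neg_sub]
      have : (τ ^ i.val * (τ ^ s.val)⁻¹)⁻¹ * (τ ^ s.val)⁻¹ * τ ^ i.val = 1 := by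
        rw [mul_inv, inv_inv]
        rw [mul_assoc _ _ (τ ^ i.val), mul_mul_mul_comm]; simp
      rw [this]; simp
    have := hBinj h2
    simpa [sub_eq_add_neg] using this
  have hgen : ∀ i, (Finset.univ.filter (fun x : F => x ∈ B i ∧ x - z ∈ C i)).card = q ^ (r - 2) :=
    fun i => card_inter q r hr hcardK hrank _ _ (hB i) (hCr i) (hne i) z
  have h0 : (Finset.univ.filter
      (fun x : F => P B 0 x ∧ P B (0 - s) (((τ ^ s.val)⁻¹ : Fˣ) * (x - z)))).card + q ^ (r - 2)
      = q ^ (r - 1) := by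
    have e2 := card_not (F := F) (fun x => x - z ∈ C 0) (fun x => x ∈ B 0)
    have e6 : (Finset.univ.filter (fun x : F => x - z ∈ C 0 ∧ x ∈ B 0))
        = Finset.univ.filter (fun x : F => x ∈ B 0 ∧ x - z ∈ C 0) := by
      ext x; simp [and_comm]
    rw [e6, hgen, card_shift q (r - 1) hcardK _ (hCr 0)] at e2
    rw [← e2]
    congr 2
    ext x
    have : 0 - s ≠ 0 := by simpa using hs
    simp only [P, if_true, this, if_false, hC, Finset.mem_filter, and_comm]
  have h1 : (Finset.univ.filter
      (fun x : F => P B s x ∧ P B (s - s) (((τ ^ s.val)⁻¹ : Fˣ) * (x - z)))).card + q ^ (r - 2)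
      = q ^ (r - 1) := by
    have e2 := card_not (F := F) (fun x => x ∈ B s) (fun x => x - z ∈ C s)
    rw [hgen, card_sub q (r - 1) hcardK _ (hB s)] at e2
    rw [← e2]
    congr 2
    ext x
    have : s - s = 0 := sub_self s
    have h3 := hC s (x - z)
    simp only [this] at h3
    simp only [P, hs, if_false, this, if_true, h3, Finset.mem_filter]
  have hm : s ∈ Finset.univ.erase (0 : ZMod l) := by simp [hs]
  rw [← Finset.add_sum_erase _ _ (Finset.mem_univ (0 : ZMod l)),
    ← Finset.add_sum_erase _ _ hm]
  have h2 : ∀ i ∈ (Finset.univ.erase (0 : ZMod l)).erase s, (Finset.univ.filter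
      (fun x : F => P B i x ∧ P B (i - s) (((τ ^ s.val)⁻¹ : Fˣ) * (x - z)))).card
      = q ^ (r - 2) := by
    intro i hi
    simp only [Finset.mem_erase, Finset.mem_univ, and_true] at hi
    have : i - s ≠ 0 := sub_ne_zero.2 hi.1
    rw [← hgen i]
    congr 1
    ext x
    simp only [P, hi.2, this, if_false, hC, Finset.mem_filter]
  rw [Finset.sum_congr rfl h2, Finset.sum_const, Finset.card_erase_of_mem hm,
    Finset.card_erase_of_mem (Finset.mem_univ _), Finset.card_univ, ZMod.card, smul_eq_mul]
  obtain ⟨r, rfl⟩ := Nat.exists_eq_add_of_le' hr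
  obtain ⟨l, rfl⟩ := Nat.exists_eq_add_of_le' hl3
  obtain ⟨c, rfl⟩ := Nat.exists_eq_add_of_le' hq
  simp only [show r + 2 - 1 = r + 1 from rfl, show r + 2 - 2 = r from rfl, pow_succ (c + 2) r,
    show l + 3 - 1 - 1 = l + 1 from rfl, show 2 * (c + 2) + (l + 3) - 4 = 2 * c + l + 3 by omega]
    at *
  nlinarith

end count

lemma params (q r l : ℕ) (hr : 2 ≤ r) (hq : 2 ≤ q) (hl : l * (q - 1) = q ^ r - 1) (hl3 : 3 ≤ l) :
    q ^ (r - 1) * (q - 1) + q ^ r * ((q ^ (r - 2) - 1) / (q - 1))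
      = q ^ (r - 2) * (2 * q + l - 4) ↔ q = 3 := by
  obtain ⟨r, rfl⟩ := Nat.exists_eq_add_of_le' hr
  obtain ⟨c, rfl⟩ := Nat.exists_eq_add_of_le' hq
  simp only [show r + 2 - 1 = r + 1 from rfl, show r + 2 - 2 = r from rfl,
    show c + 2 - 1 = c + 1 from rfl] at *
  obtain ⟨d, hd⟩ : (c + 1) ∣ (c + 2) ^ r - 1 := by
    simpa using Nat.sub_dvd_pow_sub_pow (c + 2) 1 r
  have hpos : 1 ≤ (c + 2) ^ r := Nat.one_le_pow _ _ (by omega)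
  have hd' : (c + 2) ^ r = (c + 1) * d + 1 := by omega
  have hl' : l = (c + 2) * (c + 2) * d + (c + 3) := by
    apply Nat.eq_of_mul_eq_mul_right (show 0 < c + 1 by omega)
    rw [hl, Nat.sub_eq_iff_eq_add (Nat.one_le_pow _ _ (by omega)), pow_succ, pow_succ, hd']
    ring
  rw [hd, Nat.mul_div_cancel_left _ (by omega), pow_succ _ (r+1), pow_succ _ r]
  have : (c + 2) ^ r * (c + 2) * (c + 1) + (c + 2) ^ r * (c + 2) * (c + 2) * d
    = (c + 2) ^ r * ((c + 2) * (c + 1) + (c + 2) * (c + 2) * d) := by ring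
  rw [this, Nat.mul_right_inj (by omega), hl']
  have e : 2 * (c + 2) + ((c + 2) * (c + 2) * d + (c + 3)) - 4 =
    3 * c + 3 + (c + 2) * (c + 2) * d := by omega
  rw [e, add_left_inj]
  constructor
  · intro h
    have : c * c = 1 := by nlinarith
    have : c = 1 := by simpa using this
    omega
  · intro h
    have : c = 1 := by omega
    subst this; rfl


lemma card_layers {F G : Type*} [Fintype F] [Fintype G] {l : ℕ} [NeZero l]
    (Φ : ZMod l × F → G) (hΦ : Function.Bijective Φ) (Q : G → Prop) (R : ZMod l → F → Prop)
    (hR : ∀ i x, Q (Φ (i, x)) ↔ R i x) :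
    Nat.card {g // Q g} = ∑ i, (Finset.univ.filter (fun x : F => R i x)).card := by
  have e : {y : ZMod l × F // R y.1 y.2} ≃ {g // Q g} :=
    (Equiv.ofBijective Φ hΦ).subtypeEquiv (fun y => (hR y.1 y.2).symm)
  rw [← Nat.card_congr e, Nat.card_eq_fintype_card, Fintype.card_subtype, Finset.card_filter,
    Fintype.sum_prod_type]
  simp only [Finset.card_filter]

end DDG

/-- in the setup `G = F ⋊ ⟨τ⟩` with `S` inverse-closed, the set
`D = X2 ∪ X3` is a reversible identity-free divisible difference set in `G` relative
to the subgroup `F` (the range of `ι`) with parameters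
`m = l`, `n = q^r`, `k = q^(r-1)(l + q − 2)`,
`λ1 = q^(r-1)(q−1) + q^r(q^(r-2)−1)/(q−1)`, `λ2 = q^(r-2)(2q + l − 4)`;
equivalently `Cay(G, X2 ∪ X3)` is a divisible design graph with these parameters and
canonical partition into the cosets of `F`.  Moreover `λ1 = λ2` iff `q = 3`. -/
theorem ddg_X2_union_X3
    (p e q r l : ℕ) (hp : p.Prime) (he : 1 ≤ e) (hq : q = p ^ e) (hr : 2 ≤ r)
    (hl : l = (q ^ r - 1) / (q - 1)) (hlpos : 0 < l)
    (K F : Type*) [Field K] [Field F] [Algebra K F] [Fintype K] [Fintype F]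
    [DecidableEq F]
    (hcardK : Fintype.card K = q) (hcardF : Fintype.card F = q ^ r)
    (hrank : Module.finrank K F = r)
    (σ : Fˣ) (hσ : ∀ u : Fˣ, u ∈ Subgroup.zpowers σ)
    (τ : Fˣ) (hτ : τ = σ ^ (q - 1))
    (G : Type*) [Group G] [Fintype G]
    (ι : F → G) (hι : ∀ x y : F, ι (x + y) = ι x * ι y)
    (hinj : Function.Injective ι)
    (t : G) (hconj : ∀ x : F, t * ι x * t⁻¹ = ι ((τ : F) * x))
    (horder : orderOf t = l)
    (hcardG : Fintype.card G = q ^ r * l)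
    (hdecomp : ∀ g : G, ∃ (x : F) (i : ℕ), i < l ∧ g = ι x * t ^ i)
    (A : Fin l → Submodule K F)
    (hA : ∀ i, Module.finrank K (A i) = r - 1)
    (hAinj : Function.Injective A)
    (hAall : ∀ W : Submodule K F, Module.finrank K W = r - 1 → ∃ i, A i = W)
    (X2 X3 S : Set G)
    (hX2 : X2 = ι '' ((Set.univ : Set F) \ (A ⟨0, hlpos⟩ : Set F)))
    (hX3 : X3 = {g : G | ∃ i : Fin l, (i : ℕ) ≠ 0 ∧
      ∃ y ∈ (A i : Set F), g = ι y * t ^ (i : ℕ)})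
    (hS : S = {g : G | ∃ i : Fin l,
      ∃ y ∈ ((Set.univ : Set F) \ (A i : Set F)), g = ι y * t ^ (i : ℕ)})
    (hSinv : S⁻¹ = S)
    (k l1 l2 : ℕ)
    (hk : k = q ^ (r - 1) * (l + q - 2))
    (hl1 : l1 = q ^ (r - 1) * (q - 1) + q ^ r * ((q ^ (r - 2) - 1) / (q - 1)))
    (hl2 : l2 = q ^ (r - 2) * (2 * q + l - 4)) :
    (X2 ∪ X3)⁻¹ = X2 ∪ X3 ∧
    (1 : G) ∉ X2 ∪ X3 ∧
    Nat.card (X2 ∪ X3 : Set G) = k ∧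
    Nat.card (Set.range ι) = q ^ r ∧
    (∀ g : G, g ≠ 1 →
      Nat.card {pr : G × G // pr.1 ∈ X2 ∪ X3 ∧ pr.2 ∈ X2 ∪ X3 ∧ pr.1 * pr.2⁻¹ = g}
        = if g ∈ Set.range ι then l1 else l2) ∧
    (∀ g : G, Nat.card {x : G // x * g⁻¹ ∈ X2 ∪ X3} = k) ∧
    (∀ g h : G, g ≠ h →
      Nat.card {x : G // x * g⁻¹ ∈ X2 ∪ X3 ∧ x * h⁻¹ ∈ X2 ∪ X3}
        = if g * h⁻¹ ∈ Set.range ι then l1 else l2) ∧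
    (l1 = l2 ↔ q = 3) := by
  have hq2 : 2 ≤ q := by
    rw [hq]
    exact hp.two_le.trans (Nat.le_self_pow (by omega) p)
  have hlq : l * (q - 1) = q ^ r - 1 := by
    rw [hl]
    exact Nat.div_mul_cancel (by simpa using Nat.sub_dvd_pow_sub_pow q 1 r)
  have hl3 : 3 ≤ l := by
    obtain ⟨r, rfl⟩ := Nat.exists_eq_add_of_le' hr
    obtain ⟨c, rfl⟩ := Nat.exists_eq_add_of_le' hq2
    have h1 : 1 ≤ (c + 2) ^ r := Nat.one_le_pow _ _ (by omega)
    have h2 : (c + 2) ^ (r + 2) = (c + 2) ^ r * ((c + 2) * (c + 2)) := by ring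
    have h3 : (c + 2) * (c + 2) ≤ (c + 2) ^ (r + 2) := by rw [h2]; nlinarith
    have h4 : (c + 3) * (c + 1) ≤ l * (c + 1) := by
      have : (c + 3) * (c + 1) + 1 = (c + 2) * (c + 2) := by ring
      simp only [show c + 2 - 1 = c + 1 from rfl] at hlq
      omega
    have := Nat.le_of_mul_le_mul_right h4 (by omega)
    omega
  haveI : NeZero l := ⟨by omega⟩
  have hτl : τ ^ l = 1 := by
    rw [hτ, ← pow_mul, mul_comm, hlq, ← hcardF, ← Fintype.card_units, pow_card_eq_one]
  have htl : t ^ l = 1 := by rw [← horder]; exact pow_orderOf_eq_one t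
  have hι0 : ι 0 = 1 := by
    have := hι 0 0
    simpa using this
  have hιneg : ∀ x, ι (-x) = (ι x)⁻¹ := by
    intro x
    rw [eq_inv_iff_mul_eq_one, ← hι]; simp [hι0]
  have hconjn : ∀ (n : ℕ) (x : F), t ^ n * ι x = ι (((τ ^ n : Fˣ) : F) * x) * t ^ n := by
    intro n
    induction n with
    | zero => intro x; simp
    | succ n ih =>
      intro x
      have h1 : t * ι x = ι ((τ : F) * x) * t := by rw [← hconj]; group
      rw [pow_succ t, mul_assoc, h1, ← mul_assoc, ih, mul_assoc, pow_succ τ, Units.val_mul,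
        mul_assoc]
  have hconjinv : ∀ (n : ℕ) (x : F),
      (t ^ n)⁻¹ * ι x = ι (((τ ^ n)⁻¹ : Fˣ) * x) * (t ^ n)⁻¹ := by
    intro n x
    rw [inv_mul_eq_iff_eq_mul, ← mul_assoc, hconjn, Units.mul_inv_cancel_left]
    group
  let B : ZMod l → Submodule K F := fun i => A ⟨i.val, ZMod.val_lt i⟩
  have hB : ∀ i, Module.finrank K (B i) = r - 1 := fun i => hA _
  have hBinj : Function.Injective B := by
    intro i j h
    have := hAinj h
    exact ZMod.val_injective l (by simpa using this)
  have hBA : ∀ i : Fin l, B ((i : ℕ) : ZMod l) = A i := by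
    intro i
    simp only [B]
    congr 1
    ext
    simp [ZMod.val_natCast, Nat.mod_eq_of_lt i.2]
  have hBall : ∀ W : Submodule K F, Module.finrank K W = r - 1 → ∃ i, B i = W := by
    intro W hW
    obtain ⟨i, hi⟩ := hAall W hW
    exact ⟨_, (hBA i).trans hi⟩
  let Φ : ZMod l × F → G := fun y => ι y.2 * t ^ y.1.val
  have hΦ : Function.Bijective Φ := by
    rw [Fintype.bijective_iff_surjective_and_card]
    constructor
    · intro g
      obtain ⟨x, i, hi, rfl⟩ := hdecomp g
      refine ⟨((i : ZMod l), x), ?_⟩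
      simp [Φ, ZMod.val_natCast, Nat.mod_eq_of_lt hi]
    · rw [Fintype.card_prod, ZMod.card, hcardF, hcardG, mul_comm]
  have hΦA : ∀ (i : Fin l) (y : F), ι y * t ^ (i : ℕ) = Φ (((i : ℕ) : ZMod l), y) := by
    intro i y
    simp [Φ, ZMod.val_natCast, Nat.mod_eq_of_lt i.2]
  have hvalfin : ∀ i : ZMod l, i ≠ 0 → i.val ≠ 0 := fun i h => by simpa using h
  have hmemS : ∀ i x, Φ (i, x) ∈ S ↔ x ∉ B i := by
    intro i x
    rw [hS]
    constructor
    · rintro ⟨j, y, hy, h⟩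
      rw [hΦA] at h
      have := hΦ.1 h
      simp only [Prod.mk.injEq] at this
      rw [this.1, this.2, hBA]
      exact hy.2
    · intro h
      exact ⟨⟨i.val, ZMod.val_lt i⟩, x, ⟨trivial, h⟩, rfl⟩
  set D : Set G := X2 ∪ X3 with hDdef
  have hD : ∀ i x, Φ (i, x) ∈ D ↔ DDG.P B i x := by
    intro i x
    have h00 : B 0 = A ⟨0, hlpos⟩ := by
      have := hBA ⟨0, hlpos⟩
      simpa using this
    have hx2 : Φ (i, x) ∈ X2 ↔ i = 0 ∧ x ∉ B 0 := by
      rw [hX2]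
      constructor
      · rintro ⟨y, hy, h⟩
        have h' : Φ (0, y) = Φ (i, x) := by rw [← h]; simp [Φ]
        have := hΦ.1 h'
        simp only [Prod.mk.injEq] at this
        refine ⟨this.1.symm, ?_⟩
        rw [← this.2, h00]
        exact hy.2
      · rintro ⟨rfl, h⟩
        rw [h00] at h
        exact ⟨x, ⟨trivial, h⟩, by simp [Φ]⟩
    have hx3 : Φ (i, x) ∈ X3 ↔ i ≠ 0 ∧ x ∈ B i := by
      rw [hX3]
      constructor
      · rintro ⟨j, hj, y, hy, h⟩
        rw [hΦA] at h
        have := hΦ.1 h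
        simp only [Prod.mk.injEq] at this
        rw [this.1, this.2, hBA]
        refine ⟨?_, hy⟩
        intro h0
        apply hj
        have := congrArg ZMod.val h0
        simpa [ZMod.val_natCast, Nat.mod_eq_of_lt j.2] using this
      · rintro ⟨h1, h2⟩
        exact ⟨⟨i.val, ZMod.val_lt i⟩, hvalfin i h1, x, h2, rfl⟩
    rw [hDdef, Set.mem_union, hx2, hx3]
    unfold DDG.P
    split_ifs with h
    · subst h; simp
    · simp [h]
  have hΦinv : ∀ i x, (Φ (i, x))⁻¹ = Φ (-i, -(((τ ^ i.val)⁻¹ : Fˣ) * x)) := by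
    intro i x
    simp only [Φ]
    rw [mul_inv_rev, ← hιneg, hconjinv, DDG.pow_val_neg t htl, mul_neg]
  have hrev1 : ∀ (i : ZMod l) (y : F), y ∉ B i → ((τ ^ i.val)⁻¹ : Fˣ) * y ∉ B (-i) := by
    intro i y h
    have h1 : (Φ (i, y))⁻¹ ∈ S := by
      rw [← Set.mem_inv, hSinv]; exact (hmemS i y).2 h
    rw [hΦinv, hmemS] at h1
    simpa using h1
  have hrev : ∀ (i : ZMod l) (y : F), y ∈ B i ↔ ((τ ^ i.val)⁻¹ : Fˣ) * y ∈ B (-i) := by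
    intro i y
    constructor
    · intro h
      by_contra h2
      have := hrev1 _ _ h2
      rw [DDG.pow_val_neg τ hτl, inv_inv, neg_neg, Units.mul_inv_cancel_left] at this
      exact this h
    · intro h
      by_contra h2
      exact hrev1 _ _ h2 h
  have hDinv1 : ∀ g, g ∈ D → g⁻¹ ∈ D := by
    intro g hg
    obtain ⟨⟨i, x⟩, rfl⟩ := hΦ.2 g
    rw [hD] at hg
    rw [hΦinv, hD]
    unfold DDG.P at *
    by_cases h : i = 0
    · subst h
      simpa using hg
    · simp only [h, if_false, neg_eq_zero, neg_mem_iff] at hg ⊢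
      exact (hrev i x).1 hg
  have hDinv : ∀ g, g⁻¹ ∈ D ↔ g ∈ D :=
    fun g => ⟨fun h => by simpa using hDinv1 _ h, hDinv1 g⟩
  have hcardD : Nat.card {g // g ∈ D} = k := by
    rw [DDG.card_layers Φ hΦ (fun g => g ∈ D) (fun i x => DDG.P B i x) hD, hk]
    exact DDG.card_P q r l hcardK hcardF hl3 hr hq2 B hB
  have hmemι : ∀ i x, Φ (i, x) ∈ Set.range ι ↔ i = 0 := by
    intro i x
    constructor
    · rintro ⟨y, hy⟩
      have h' : Φ (0, y) = Φ (i, x) := by rw [← hy]; simp [Φ]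
      have := hΦ.1 h'
      simp only [Prod.mk.injEq] at this
      exact this.1.symm
    · rintro rfl
      exact ⟨x, by simp [Φ]⟩
  have hpairs1 : ∀ g : G, g ≠ 1 → Nat.card {d : G // d ∈ D ∧ g⁻¹ * d ∈ D}
      = if g ∈ Set.range ι then l1 else l2 := by
    intro g hg
    obtain ⟨⟨s, z⟩, rfl⟩ := hΦ.2 g
    have hmul : ∀ i x, (Φ (s, z))⁻¹ * Φ (i, x)
        = Φ (i - s, ((τ ^ s.val)⁻¹ : Fˣ) * (x - z)) := by
      intro i x
      simp only [Φ]
      rw [mul_inv_rev, ← hιneg, mul_assoc, ← mul_assoc (ι (-z)), ← hι, ← mul_assoc, hconjinv,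
        mul_assoc, sub_eq_add_neg i s, add_comm i, DDG.pow_val_add t htl, DDG.pow_val_neg t htl,
        neg_add_eq_sub]
    rw [DDG.card_layers Φ hΦ (fun d => d ∈ D ∧ (Φ (s, z))⁻¹ * d ∈ D)
      (fun i x => DDG.P B i x ∧ DDG.P B (i - s) (((τ ^ s.val)⁻¹ : Fˣ) * (x - z)))
      (fun i x => by rw [hmul, hD, hD])]
    by_cases hs : s = 0
    · subst hs
      have hz : z ≠ 0 := by
        rintro rfl
        apply hg
        simp [Φ, hι0]
      rw [if_pos ((hmemι 0 z).2 rfl), hl1,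
        ← DDG.card_same q r l hr hcardK hcardF hlq hq2 B hB hBinj hBall z hz]
      simp
    · rw [if_neg (fun h => hs ((hmemι s z).1 h)), hl2]
      convert DDG.card_diff q r l hr hcardK hrank hl3 hq2 B hB hBinj τ hτl hrev s hs z
  refine ⟨?_, ?_, hcardD, ?_, ?_, ?_, ?_, ?_⟩
  · ext g
    rw [Set.mem_inv]
    exact hDinv g
  · have h1 : (1 : G) = Φ (0, 0) := by simp [Φ, hι0]
    rw [h1, hD]
    simp [DDG.P]
  · rw [Nat.card_congr (Equiv.ofInjective ι hinj).symm, Nat.card_eq_fintype_card, hcardF]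
  · intro g hg
    rw [← hpairs1 g hg]
    refine Nat.card_congr ⟨fun y => ⟨y.1.1, y.2.1, ?_⟩, fun d => ⟨(d.1, g⁻¹ * d.1), d.2.1, d.2.2, ?_⟩,
      ?_, ?_⟩
    · have : g⁻¹ * y.1.1 = y.1.2 := by
        rw [inv_mul_eq_iff_eq_mul]; exact mul_inv_eq_iff_eq_mul.1 y.2.2.2
      rw [this]; exact y.2.2.1
    · group
    · rintro ⟨⟨a, b⟩, h1, h2, h3⟩
      simp only [Subtype.mk.injEq, Prod.mk.injEq, true_and]
      simp only at h3
      rw [← h3]; group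
    · rintro ⟨d, h⟩
      rfl
  · intro g
    rw [← hcardD]
    exact Nat.card_congr ((Equiv.mulRight g⁻¹).subtypeEquiv (fun x => Iff.rfl))
  · intro g h hgh
    rw [← hpairs1 (g * h⁻¹) (fun hh => hgh (mul_inv_eq_one.1 hh))]
    refine Nat.card_congr (((Equiv.inv G).trans (Equiv.mulLeft g)).subtypeEquiv (fun x => ?_))
    have e1 : ((Equiv.inv G).trans (Equiv.mulLeft g)) x = (x * g⁻¹)⁻¹ := by
      simp
    have e2 : (g * h⁻¹)⁻¹ * (x * g⁻¹)⁻¹ = (x * h⁻¹)⁻¹ := by group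
    rw [e1, e2, hDinv, hDinv]
  · rw [hl1, hl2]
    exact DDG.params q r l hr hq2 hlq hl3
end

section
/- Let A be a finite abelian group, N ≤ A a proper nontrivial subgroup, and D ⊆ A a divisible difference set relative to N with parameters (m,n,k,λ1,λ2), m, n > 1, satisfying the intersection condition and with k ≤ mn−k; put k_3 = k and k_4 = mn−k. Suppose (as rationals) 1/k + 1/(mn−k) = 1/(n−1) − 1/n, and (m,n,k) ≠ (4,2,4). Let G = Dih(A) with reflecting element b, X2 = A\N, X3 = Db, X4 = (A\D)b. Then for each i ∈ {3,4}, the Cayley graph Cay(G, X2 ∪ X_i) is a proper divisible design graph with parameters v' = 2mn, k' = n(m−1) + k_i, λ1' = n(m−1) + k_i(k_i − m)/((n−1)m), λ2' = 2(m−1)k_i/m, m' = 2, n' = mn, whose canonical partition is into the two cosets A and Ab of A in G. -/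
open Classical

/-- Number of elements satisfying a predicate. -/
noncomputable def cnt {α : Type*} (p : α → Prop) : ℕ := Nat.card {x : α // p x}

theorem cnt_eq_sum {α : Type*} [Fintype α] (p : α → Prop) :
    cnt p = ∑ x : α, if p x then 1 else 0 := by
  unfold cnt
  rw [Nat.card_eq_fintype_card, Fintype.card_subtype, Finset.card_filter]

theorem cnt_congr {α β : Type*} (e : α ≃ β) (p : α → Prop) (q : β → Prop)
    (h : ∀ x, p x ↔ q (e x)) : cnt p = cnt q :=
  Nat.card_congr (e.subtypeEquiv h)

theorem cnt_iff {α : Type*} (p q : α → Prop)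
    (h : ∀ x, p x ↔ q x) : cnt p = cnt q :=
  cnt_congr (Equiv.refl α) p q h

theorem cnt_split {α : Type*} [Fintype α] (p q : α → Prop) :
    cnt (fun x => p x ∧ q x) + cnt (fun x => p x ∧ ¬ q x) = cnt p := by
  simp only [cnt_eq_sum]
  rw [← Finset.sum_add_distrib]
  apply Finset.sum_congr rfl
  intro x _
  by_cases h1 : p x <;> by_cases h2 : q x <;> simp [h1, h2]

theorem cnt_not {α : Type*} [Fintype α] (q : α → Prop) :
    cnt q + cnt (fun x => ¬ q x) = Fintype.card α := by
  simp only [cnt_eq_sum]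
  rw [← Finset.sum_add_distrib, ← Finset.card_univ, Finset.card_eq_sum_ones]
  apply Finset.sum_congr rfl
  intro x _
  by_cases h2 : q x <;> simp [h2]

theorem cnt_prod {α β : Type*} [Fintype α] [Fintype β] (p : α → Prop) (r : α → β → Prop) (c : ℕ)
    (h : ∀ x, p x → cnt (r x) = c) :
    cnt (fun z : α × β => p z.1 ∧ r z.1 z.2) = cnt p * c := by
  simp only [cnt_eq_sum, Fintype.sum_prod_type, Finset.sum_mul]
  apply Finset.sum_congr rfl
  intro x _
  by_cases hp : p x
  · have := h x hp
    rw [cnt_eq_sum] at this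
    simp only [hp, true_and, this, if_true, one_mul]
  · simp [hp]

theorem cnt_mulR {A : Type*} [Group A] (p : A → Prop) (c : A) :
    cnt (fun x => p (x * c)) = cnt p :=
  cnt_congr (Equiv.mulRight c) _ _ (fun _ => Iff.rfl)

section E
variable {A : Type*} [CommGroup A] [Fintype A] (N : Subgroup A) (E : Set A)
  (m n μ e1 e2 : ℕ)

theorem E_size (hA : Fintype.card A = m * n) (hn : cnt (fun x => x ∈ N) = n) (hn0 : 0 < n)
    (hμ : ∀ g : A, cnt (fun x => x ∈ E ∧ x * g⁻¹ ∈ N) = μ) :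
    cnt (fun x => x ∈ E) = m * μ := by
  have h1 := cnt_prod (fun _ : A => True) (fun g x => x ∈ E ∧ x * g⁻¹ ∈ N) μ (fun g _ => hμ g)
  have h2 := cnt_prod (fun x : A => x ∈ E) (fun x g => x * g⁻¹ ∈ N) n (by
    intro x _
    rw [← hn]
    exact cnt_congr ((Equiv.inv A).trans (Equiv.mulLeft x)) _ _ (fun _ => Iff.rfl))
  have h3 : cnt (fun _ : A => True) = m * n := by
    rw [cnt_eq_sum]; simp [hA]
  have h4 : cnt (fun z : A × A => True ∧ (z.2 ∈ E ∧ z.2 * z.1⁻¹ ∈ N))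
      = cnt (fun z : A × A => z.1 ∈ E ∧ z.1 * z.2⁻¹ ∈ N) :=
    cnt_congr (Equiv.prodComm A A) _ _ (fun z => by simp)
  rw [h3] at h1
  apply Nat.eq_of_mul_eq_mul_right hn0
  rw [← h2, ← h4, h1]; ring

theorem E_l1 (hn : cnt (fun x => x ∈ N) = n) (k : ℕ) (hk : cnt (fun x => x ∈ E) = k)
    (hμ : ∀ g : A, cnt (fun x => x ∈ E ∧ x * g⁻¹ ∈ N) = μ)
    (hl : ∀ g : A, g ≠ 1 → cnt (fun x => x ∈ E ∧ x * g⁻¹ ∈ E) = if g ∈ N then e1 else e2) :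
    k + (n - 1) * e1 = k * μ := by
  have h1 := cnt_prod (fun y : A => y ∈ E) (fun y x => x ∈ E ∧ x * y⁻¹ ∈ N) μ (fun g _ => hμ g)
  have h4 : cnt (fun z : A × A => z.1 ∈ E ∧ (z.2 ∈ E ∧ z.2 * z.1⁻¹ ∈ N))
      = cnt (fun z : A × A => z.1 ∈ N ∧ (z.2 ∈ E ∧ z.2 * z.1⁻¹ ∈ E)) := by
    refine cnt_congr ⟨fun z => (z.2 * z.1⁻¹, z.2), fun z => (z.1⁻¹ * z.2, z.2), ?_, ?_⟩ _ _ ?_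
    · intro z; simp
    · intro z; ext <;> simp
    · intro z
      simp; tauto
  have h5 := cnt_split (fun z : A × A => z.1 ∈ N ∧ (z.2 ∈ E ∧ z.2 * z.1⁻¹ ∈ E)) (fun z => z.1 = 1)
  have h6 := cnt_prod (fun y : A => y = 1) (fun g x => x ∈ E ∧ x * g⁻¹ ∈ E) k (by
    rintro x rfl
    rw [← hk]; apply cnt_iff; simp)
  have h7 := cnt_prod (fun y : A => y ∈ N ∧ y ≠ 1) (fun g x => x ∈ E ∧ x * g⁻¹ ∈ E) e1 (by
    rintro x ⟨hx, hx1⟩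
    rw [hl x hx1, if_pos hx])
  have h8 : cnt (fun y : A => y = 1) = 1 := by rw [cnt_eq_sum]; simp
  have h9 := cnt_split (fun y : A => y ∈ N) (fun y => y = 1)
  have h10 : cnt (fun y : A => y ∈ N ∧ y = 1) = 1 := by
    rw [← h8]; apply cnt_iff; intro x; constructor
    · exact fun h => h.2
    · rintro rfl; exact ⟨N.one_mem, rfl⟩
  have h11 : cnt (fun y : A => y ∈ N ∧ y ≠ 1) = n - 1 := by
    have : cnt (fun y : A => y ∈ N ∧ y ≠ 1) = cnt (fun y : A => y ∈ N ∧ ¬ y = 1) := rfl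
    omega
  rw [h11] at h7
  rw [h8, one_mul] at h6
  rw [← hk, ← h1, h4, ← h5, ← h7, hk]
  congr 1
  · rw [← h6]; apply cnt_iff
    intro z; constructor
    · rintro ⟨h, hh⟩; exact ⟨⟨by rw [h]; exact N.one_mem, hh⟩, h⟩
    · rintro ⟨⟨h, h'⟩, h''⟩; exact ⟨h'', h'⟩
  · apply cnt_iff
    intro z; simp only [ne_eq]; tauto

theorem E_l2 (hA : Fintype.card A = m * n) (hn : cnt (fun x => x ∈ N) = n) (k : ℕ)
    (hk : cnt (fun x => x ∈ E) = k)
    (hμ : ∀ g : A, cnt (fun x => x ∈ E ∧ x * g⁻¹ ∈ N) = μ)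
    (hl : ∀ g : A, g ≠ 1 → cnt (fun x => x ∈ E ∧ x * g⁻¹ ∈ E) = if g ∈ N then e1 else e2) :
    k * μ + (m * n - n) * e2 = k * k := by
  have h1 := cnt_prod (fun y : A => y ∈ E) (fun y x => x ∈ E ∧ x * y⁻¹ ∈ N) μ (fun g _ => hμ g)
  have h2 := cnt_prod (fun y : A => y ∈ E) (fun _ x => x ∈ E) k (fun g _ => hk)
  have h3 := cnt_split (fun z : A × A => z.1 ∈ E ∧ z.2 ∈ E) (fun z => z.2 * z.1⁻¹ ∈ N)
  have h4 : cnt (fun z : A × A => (z.1 ∈ E ∧ z.2 ∈ E) ∧ ¬ z.2 * z.1⁻¹ ∈ N)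
      = cnt (fun z : A × A => ¬ z.1 ∈ N ∧ (z.2 ∈ E ∧ z.2 * z.1⁻¹ ∈ E)) := by
    refine cnt_congr ⟨fun z => (z.2 * z.1⁻¹, z.2), fun z => (z.1⁻¹ * z.2, z.2), ?_, ?_⟩ _ _ ?_
    · intro z; simp
    · intro z; ext <;> simp
    · intro z
      simp; tauto
  have h7 := cnt_prod (fun y : A => ¬ y ∈ N) (fun g x => x ∈ E ∧ x * g⁻¹ ∈ E) e2 (by
    intro x hx
    have hx1 : x ≠ 1 := by rintro rfl; exact hx N.one_mem
    rw [hl x hx1, if_neg hx])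
  have h8 := cnt_not (fun y : A => y ∈ N)
  have h9 : cnt (fun y : A => ¬ y ∈ N) = m * n - n := by omega
  have h10 : cnt (fun z : A × A => (z.1 ∈ E ∧ z.2 ∈ E) ∧ z.2 * z.1⁻¹ ∈ N)
    = cnt (fun z : A × A => z.1 ∈ E ∧ (z.2 ∈ E ∧ z.2 * z.1⁻¹ ∈ N)) :=
    cnt_iff _ _ (fun z => and_assoc)
  rw [h9] at h7
  rw [hk] at h1 h2
  omega

theorem E_compl_l (hA : Fintype.card A = m * n) (k : ℕ) (hk : cnt (fun x => x ∈ E) = k) (g : A) :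
    cnt (fun x => x ∉ E ∧ x * g⁻¹ ∉ E) + 2 * k
      = m * n + cnt (fun x => x ∈ E ∧ x * g⁻¹ ∈ E) := by
  have h1 := cnt_split (fun x => x ∉ E) (fun x => x * g⁻¹ ∈ E)
  have h2 := cnt_split (fun x => x * g⁻¹ ∈ E) (fun x => x ∈ E)
  have h3 := cnt_mulR (fun x => x ∈ E) g⁻¹
  have h4 := cnt_not (fun x => x ∈ E)
  have h5 := cnt_iff (fun x => x ∉ E ∧ x * g⁻¹ ∈ E) (fun x => x * g⁻¹ ∈ E ∧ ¬ x ∈ E)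
    (fun _ => and_comm)
  have h6 := cnt_iff (fun x => x ∈ E ∧ x * g⁻¹ ∈ E) (fun x => x * g⁻¹ ∈ E ∧ x ∈ E)
    (fun _ => and_comm)
  omega

theorem E_compl_mu (hn : cnt (fun x => x ∈ N) = n)
    (hμ : ∀ g : A, cnt (fun x => x ∈ E ∧ x * g⁻¹ ∈ N) = μ) (g : A) :
    μ + cnt (fun x => x ∉ E ∧ x * g⁻¹ ∈ N) = n := by
  have h1 := cnt_split (fun x => x * g⁻¹ ∈ N) (fun x => x ∈ E)
  have h2 := cnt_mulR (fun x => x ∈ N) g⁻¹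
  have h3 := hμ g
  have h5 := cnt_iff (fun x => x ∉ E ∧ x * g⁻¹ ∈ N) (fun x => x * g⁻¹ ∈ N ∧ ¬ x ∈ E)
    (fun _ => and_comm)
  have h6 := cnt_iff (fun x => x ∈ E ∧ x * g⁻¹ ∈ N) (fun x => x * g⁻¹ ∈ N ∧ x ∈ E)
    (fun _ => and_comm)
  omega

theorem N_count (hA : Fintype.card A = m * n) (hn : cnt (fun x => x ∈ N) = n) (c : A) :
    cnt (fun x => x ∉ N ∧ x * c ∉ N) + 2 * n = m * n + if c ∈ N then n else 0 := by
  have h := E_compl_l (N : Set A) m n hA n hn c⁻¹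
  simp only [inv_inv, SetLike.mem_coe] at h
  rw [h]
  congr 1
  split_ifs with hc
  · rw [← hn]
    apply cnt_iff
    intro x
    constructor
    · exact fun h => h.1
    · exact fun h => ⟨h, N.mul_mem h hc⟩
  · rw [cnt_eq_sum]
    apply Finset.sum_eq_zero
    intro x _
    rw [if_neg]
    rintro ⟨h1, h2⟩
    exact hc ((Subgroup.mul_mem_cancel_left N h1).1 h2)

end E

theorem arith1 (m n μ e1 e2 : ℕ) (hm1 : 1 < m) (hn1 : 1 < n)
    (hμ0 : 0 < μ) (hμn : μ < n)
    (hq : m * μ * (n - μ) = n * n * (n - 1))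
    (h1 : m * μ + (n - 1) * e1 = m * μ * μ)
    (h2 : m * μ * μ + (m * n - n) * e2 = m * μ * (m * μ)) : e2 = e1 + n := by
  obtain ⟨M, rfl⟩ : ∃ M, m = M + 2 := ⟨m - 2, by omega⟩
  obtain ⟨P, rfl⟩ : ∃ P, n = P + 2 := ⟨n - 2, by omega⟩
  have a1 : (M + 2) * (P + 2) - (P + 2) = (M + 1) * (P + 2) := by
    rw [show (M + 2) * (P + 2) = (M + 1) * (P + 2) + (P + 2) by ring]; omega
  have a2 : P + 2 - 1 = P + 1 := by omega
  rw [a1] at h2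
  rw [a2] at hq h1
  zify [hμn.le] at hq h1 h2 ⊢
  have b2 : ((P:ℤ) + 2) * e2 = (M + 2) * μ * μ := by
    have : ((M:ℤ) + 1) ≠ 0 := by positivity
    apply mul_left_cancel₀ this
    linear_combination h2
  have : ((P:ℤ) + 1) * (P + 2) ≠ 0 := by positivity
  apply mul_left_cancel₀ this
  linear_combination (P + 1 : ℤ) * b2 - (P + 2 : ℤ) * h1 + hq

theorem arith2 (m n μ e1 e2 : ℕ) (hm1 : 1 < m) (hn1 : 1 < n)
    (hμ0 : 0 < μ) (hμn : μ < n)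
    (hq : m * μ * (n - μ) = n * n * (n - 1))
    (h2 : m * μ * μ + (m * n - n) * e2 = m * μ * (m * μ))
    (he : e2 = e1 + n)
    (hne : ¬(m = 4 ∧ n = 2 ∧ μ = 1)) :
    n * (m - 1) + e1 ≠ 2 * (m - 1) * μ := by
  intro hh
  subst he
  obtain ⟨M, rfl⟩ : ∃ M, m = M + 2 := ⟨m - 2, by omega⟩
  obtain ⟨P, rfl⟩ : ∃ P, n = P + 2 := ⟨n - 2, by omega⟩
  have a1 : (M + 2) * (P + 2) - (P + 2) = (M + 1) * (P + 2) := by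
    rw [show (M + 2) * (P + 2) = (M + 1) * (P + 2) + (P + 2) by ring]; omega
  have a2 : P + 2 - 1 = P + 1 := by omega
  have a3 : M + 2 - 1 = M + 1 := by omega
  rw [a1] at h2
  rw [a2] at hq
  rw [a3] at hh
  zify [hμn.le] at hq h2 hh
  have b2 : ((P:ℤ) + 2) * (e1 + (P + 2)) = (M + 2) * μ * μ := by
    have : ((M:ℤ) + 1) ≠ 0 := by positivity
    apply mul_left_cancel₀ this
    linear_combination h2
  have hd : ((P:ℤ) + 2 - μ) ≠ 0 := by
    have : (μ:ℤ) < (P:ℤ) + 2 := by exact_mod_cast hμn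
    omega
  have c1 : ((M:ℤ) + 2) * (P + 2 - μ) = 2 * (P + 2) := by
    apply mul_left_cancel₀ hd
    linear_combination (P + 2 : ℤ) * hh - b2
  have c2 : 2 * (μ : ℤ) = (P + 2) * (P + 1) := by
    have : ((P:ℤ) + 2) ≠ 0 := by positivity
    apply mul_left_cancel₀ this
    linear_combination hq - (μ : ℤ) * c1
  have c3 : ((M:ℤ) + 2) * (1 - P) = 4 := by
    have : ((P:ℤ) + 2) ≠ 0 := by positivity
    apply mul_left_cancel₀ this
    linear_combination 2 * c1 + (M + 2 : ℤ) * c2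
  have hP : P = 0 := by
    by_contra h
    have : (1:ℤ) ≤ P := by exact_mod_cast Nat.pos_of_ne_zero h
    nlinarith
  subst hP
  apply hne
  refine ⟨?_, rfl, ?_⟩ <;> simp at c2 c3 <;> omega

theorem core {A : Type*} [CommGroup A] [Fintype A]
    {G : Type*} [Group G] [Fintype G]
    (ι : A →* G) (hinj : Function.Injective ι)
    (b : G) (hb2 : b * b = 1)
    (hbconj : ∀ a : A, b * ι a * b⁻¹ = ι a⁻¹)
    (hbnot : b ∉ Set.range ι)
    (hdecomp : ∀ g : G, (∃ a, g = ι a) ∨ (∃ a, g = ι a * b))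
    (N : Subgroup A) (hNbot : N ≠ ⊥) (E : Set A) (m n μ e1 e2 : ℕ)
    (hm1 : 1 < m) (hn1 : 1 < n) (hμ0 : 0 < μ) (hμn : μ < n)
    (hA : Fintype.card A = m * n) (hn : cnt (fun x => x ∈ N) = n)
    (hμ : ∀ g : A, cnt (fun x => x ∈ E ∧ x * g⁻¹ ∈ N) = μ)
    (hl : ∀ g : A, g ≠ 1 → cnt (fun x => x ∈ E ∧ x * g⁻¹ ∈ E) = if g ∈ N then e1 else e2)
    (hq : m * μ * (n - μ) = n * n * (n - 1))
    (hne : ¬(m = 4 ∧ n = 2 ∧ μ = 1))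
    (X : Set G) (hX : X = ι '' ((Set.univ : Set A) \ (N : Set A)) ∪ (fun a => ι a * b) '' E) :
    ∃ l1' l2' : ℕ,
        (l1' : ℚ) = (n : ℚ) * ((m : ℚ) - 1)
            + ((m * μ : ℕ) : ℚ) * (((m * μ : ℕ) : ℚ) - (m : ℚ)) / (((n : ℚ) - 1) * (m : ℚ)) ∧
        (l2' : ℚ) = 2 * ((m : ℚ) - 1) * ((m * μ : ℕ) : ℚ) / (m : ℚ) ∧
        X⁻¹ = X ∧
        (1 : G) ∉ X ∧
        (∀ g : G, Nat.card {x : G // x * g⁻¹ ∈ Set.range ι} = m * n) ∧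
        (∀ g : G, Nat.card {x : G // x * g⁻¹ ∈ X} = n * (m - 1) + m * μ) ∧
        (∀ g h : G, g ≠ h →
          Nat.card {x : G // x * g⁻¹ ∈ X ∧ x * h⁻¹ ∈ X}
            = if g * h⁻¹ ∈ Set.range ι then l1' else l2') ∧
        l1' ≠ l2' := by
  have hk := E_size N E m n μ hA hn (by omega) hμ
  have h1 := E_l1 N E n μ e1 e2 hn _ hk hμ hl
  have h2 := E_l2 N E m n μ e1 e2 hA hn _ hk hμ hl
  have he := arith1 m n μ e1 e2 hm1 hn1 hμ0 hμn hq h1 h2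
  have hb' : b⁻¹ = b := inv_eq_of_mul_eq_one_left hb2
  have hba : ∀ a, b * ι a = ι a⁻¹ * b := by
    intro a
    rw [← hbconj a]; group
  have hdisj : ∀ a c, ι a ≠ ι c * b := by
    intro a c h
    exact hbnot ⟨c⁻¹ * a, by rw [map_mul, h, map_inv]; group⟩
  have hXa : ∀ a, ι a ∈ X ↔ a ∉ N := by
    intro a
    subst hX
    constructor
    · rintro (⟨c, hc, h⟩ | ⟨c, hc, h⟩)
      · rw [← hinj h]; exact hc.2
      · exact absurd h.symm (hdisj _ _)
    · exact fun h => Or.inl ⟨a, ⟨trivial, h⟩, rfl⟩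
  have hXb : ∀ a, ι a * b ∈ X ↔ a ∈ E := by
    intro a
    subst hX
    constructor
    · rintro (⟨c, hc, h⟩ | ⟨c, hc, h⟩)
      · exact absurd h (hdisj _ _)
      · rw [← hinj (mul_right_cancel h)]; exact hc
    · exact fun h => Or.inr ⟨a, h, rfl⟩
  have hcnt : ∀ p : G → Prop, cnt p = cnt (fun a => p (ι a)) + cnt (fun a => p (ι a * b)) := by
    intro p
    let e : A ⊕ A ≃ G := Equiv.ofBijective (Sum.elim ι (fun a => ι a * b)) (by
      constructor
      · rintro (x | x) (y | y) h
        · exact congrArg _ (hinj h)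
        · exact absurd h (hdisj _ _)
        · exact absurd h.symm (hdisj _ _)
        · exact congrArg _ (hinj (mul_right_cancel h))
      · intro g
        rcases hdecomp g with ⟨a, rfl⟩ | ⟨a, rfl⟩
        · exact ⟨Sum.inl a, rfl⟩
        · exact ⟨Sum.inr a, rfl⟩)
    rw [← cnt_congr e (fun x => p (e x)) p (fun _ => Iff.rfl)]
    rw [cnt_eq_sum, Fintype.sum_sum_type, cnt_eq_sum, cnt_eq_sum]
    rfl
  have hNc : cnt (fun a : A => a ∉ N) = n * (m - 1) := by
    have := cnt_not (fun a : A => a ∈ N)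
    rw [hn, hA] at this
    rw [Nat.mul_sub, mul_comm n m]; omega
  refine ⟨n * (m - 1) + e1, 2 * (m - 1) * μ, ?_, ?_, ?_, ?_, ?_, ?_, ?_, ?_⟩
  · have hn' : ((n:ℚ) - 1) ≠ 0 := by
      have : (1:ℚ) < n := by exact_mod_cast hn1
      linarith
    have hm' : (m:ℚ) ≠ 0 := by positivity
    have h1q : (m:ℚ) * μ + ((n:ℚ) - 1) * e1 = m * μ * μ := by
      have := congrArg (Nat.cast : ℕ → ℚ) h1
      push_cast [Nat.cast_sub hn1.le] at this
      exact this
    push_cast [Nat.cast_sub hm1.le]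
    field_simp
    linear_combination h1q
  · have hm' : (m:ℚ) ≠ 0 := by positivity
    push_cast [Nat.cast_sub hm1.le]
    field_simp
  · ext g
    rw [Set.mem_inv]
    rcases hdecomp g with ⟨a, rfl⟩ | ⟨a, rfl⟩
    · rw [← map_inv, hXa, hXa, inv_mem_iff]
    · rw [mul_inv_rev, hb', ← map_inv, hba, inv_inv]
  · rw [← map_one ι, hXa]
    exact fun h => h N.one_mem
  · intro g
    change cnt (fun x => x * g⁻¹ ∈ Set.range ι) = _
    rw [cnt_mulR (fun x => x ∈ Set.range ι) g⁻¹, hcnt]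
    have a1 : cnt (fun a => ι a ∈ Set.range ι) = m * n := by
      rw [cnt_eq_sum]; simp [hA]
    have a2 : cnt (fun a => ι a * b ∈ Set.range ι) = 0 := by
      rw [cnt_eq_sum]
      apply Finset.sum_eq_zero
      intro a _
      rw [if_neg]
      rintro ⟨c, hc⟩
      exact hdisj _ _ hc
    omega
  · intro g
    change cnt (fun x => x * g⁻¹ ∈ X) = _
    rw [cnt_mulR (fun x => x ∈ X) g⁻¹, hcnt]
    simp only [hXa, hXb]
    rw [hNc, hk]
  · intro g h hgh
    change cnt (fun x => x * g⁻¹ ∈ X ∧ x * h⁻¹ ∈ X) = _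
    rw [← cnt_mulR (fun x => x * g⁻¹ ∈ X ∧ x * h⁻¹ ∈ X) g]
    simp only [mul_inv_cancel_right, mul_assoc _ g h⁻¹]
    have hu : g * h⁻¹ ≠ 1 := by
      rwa [ne_eq, mul_inv_eq_one]
    generalize g * h⁻¹ = u at hu
    rw [hcnt]
    rcases hdecomp u with ⟨c, rfl⟩ | ⟨c, rfl⟩
    · have hc : c ≠ 1 := by rintro rfl; exact hu (map_one ι)
      rw [if_pos ⟨c, rfl⟩]
      have e : ∀ a, ι a * b * ι c = ι (a * c⁻¹) * b := by
        intro a; rw [mul_assoc, hba, ← mul_assoc, map_mul]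
      simp only [e, ← map_mul, hXa, hXb]
      have h3 := N_count N m n hA hn c
      have h4 := hl c hc
      have h5 : n * (m - 1) + n = m * n := by
        obtain ⟨M, rfl⟩ : ∃ M, m = M + 1 := ⟨m - 1, by omega⟩
        simp; ring
      rw [h4]
      split_ifs at h3 ⊢ <;> omega
    · rw [if_neg (by rintro ⟨a, ha⟩; exact hdisj _ _ ha)]
      have e1 : ∀ a, ι a * (ι c * b) = ι (a * c) * b := by
        intro a; rw [map_mul, mul_assoc]
      have e2 : ∀ a, ι a * b * (ι c * b) = ι (a * c⁻¹) := by
        intro a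
        rw [mul_assoc, ← mul_assoc b, hba, mul_assoc (ι c⁻¹), hb2, mul_one, map_mul]
      simp only [e1, e2, hXa, hXb]
      have h3 := cnt_split (fun a => a ∈ E) (fun a => a * c⁻¹ ∈ N)
      have h4 := hμ c
      have h5 : cnt (fun a => a ∉ N ∧ a * c ∈ E) = cnt (fun a => a ∈ E ∧ ¬ a * c⁻¹ ∈ N) := by
        rw [← cnt_mulR (fun a => a ∈ E ∧ ¬ a * c⁻¹ ∈ N) c]
        apply cnt_iff
        intro x
        simp only [mul_inv_cancel_right]
        exact and_comm
      rw [h5]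
      obtain ⟨M, rfl⟩ : ∃ M, m = M + 1 := ⟨m - 1, by omega⟩
      simp only [Nat.add_sub_cancel]
      rw [hk] at h3
      rw [add_mul, one_mul] at h3
      rw [mul_assoc]
      omega
  · exact arith2 m n μ e1 e2 hm1 hn1 hμ0 hμn hq h2 he hne

/-- for a divisible difference set `D` relative to `N ≤ A` with
`m, n > 1`, `k ≤ mn − k`, satisfying the intersection condition, Eq. (1)
`1/k + 1/(mn−k) = 1/(n−1) − 1/n` and `(m,n,k) ≠ (4,2,4)`, the Cayley graphs
`Cay(G, X2 ∪ X3)` and `Cay(G, X2 ∪ X4)` over `G = Dih(A)` are proper divisible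
design graphs with parameters `v' = 2mn`, `k' = n(m−1) + kᵢ`,
`λ1' = n(m−1) + kᵢ(kᵢ−m)/((n−1)m)`, `λ2' = 2(m−1)kᵢ/m`, `m' = 2`, `n' = mn`,
with canonical partition into the two cosets of `A` in `G`. -/
theorem dihedral_ddg_eq1
    (A : Type*) [CommGroup A] [Fintype A] [DecidableEq A]
    (G : Type*) [Group G] [Fintype G]
    (ι : A →* G) (hinj : Function.Injective ι)
    (b : G) (hb2 : b * b = 1) (hb1 : b ≠ 1)
    (hbconj : ∀ a : A, b * ι a * b⁻¹ = ι a⁻¹)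
    (hbnot : b ∉ Set.range ι)
    (hcardG : Fintype.card G = 2 * Fintype.card A)
    (hdecomp : ∀ g : G, (∃ a, g = ι a) ∨ (∃ a, g = ι a * b))
    (N : Subgroup A) (hNtop : N ≠ ⊤) (hNbot : N ≠ ⊥)
    (D : Set A) (hDne : D.Nonempty)
    (m n k l1 l2 : ℕ) (hm : N.index = m) (hn : Nat.card N = n)
    (hk : Nat.card D = k) (hm1 : 1 < m) (hn1 : 1 < n)
    (hdds : ∀ g : A, g ≠ 1 →
      Nat.card {pr : A × A // pr.1 ∈ D ∧ pr.2 ∈ D ∧ pr.1 * pr.2⁻¹ = g}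
        = if g ∈ N then l1 else l2)
    (hic : ∃ μ : ℕ, ∀ g : A, Nat.card {x : A // x ∈ D ∧ x * g⁻¹ ∈ N} = μ)
    (hkle : k ≤ m * n - k) (hkmn : k ≤ m * n)
    (heq : 1 / (k : ℚ) + 1 / ((m * n - k : ℕ) : ℚ)
        = 1 / ((n : ℚ) - 1) - 1 / (n : ℚ))
    (hne : ¬(m = 4 ∧ n = 2 ∧ k = 4))
    (X2 : Set G) (hX2 : X2 = ι '' ((Set.univ : Set A) \ (N : Set A))) :
    ∀ (Xi : Set G) (ki : ℕ),
      ((Xi = (fun a => ι a * b) '' D ∧ ki = k) ∨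
        (Xi = (fun a => ι a * b) '' ((Set.univ : Set A) \ D) ∧ ki = m * n - k)) →
      ∃ l1' l2' : ℕ,
        (l1' : ℚ) = (n : ℚ) * ((m : ℚ) - 1)
            + (ki : ℚ) * ((ki : ℚ) - (m : ℚ)) / (((n : ℚ) - 1) * (m : ℚ)) ∧
        (l2' : ℚ) = 2 * ((m : ℚ) - 1) * (ki : ℚ) / (m : ℚ) ∧
        (X2 ∪ Xi)⁻¹ = X2 ∪ Xi ∧
        (1 : G) ∉ X2 ∪ Xi ∧
        Fintype.card G = 2 * (m * n) ∧
        (∀ g : G, Nat.card {x : G // x * g⁻¹ ∈ Set.range ι} = m * n) ∧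
        (∀ g : G, Nat.card {x : G // x * g⁻¹ ∈ X2 ∪ Xi} = n * (m - 1) + ki) ∧
        (∀ g h : G, g ≠ h →
          Nat.card {x : G // x * g⁻¹ ∈ X2 ∪ Xi ∧ x * h⁻¹ ∈ X2 ∪ Xi}
            = if g * h⁻¹ ∈ Set.range ι then l1' else l2') ∧
        l1' ≠ l2' ∧ 1 < m * n := by
  intro Xi ki hXi
  have hn' : cnt (fun x => x ∈ N) = n := hn
  have hA : Fintype.card A = m * n := by
    rw [← Nat.card_eq_fintype_card, ← N.card_mul_index, hm, hn, mul_comm]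
  obtain ⟨μ, hμ⟩ := hic
  have hμ' : ∀ g : A, cnt (fun x => x ∈ D ∧ x * g⁻¹ ∈ N) = μ := hμ
  have hk0 := E_size N D m n μ hA hn' (by omega) hμ'
  have hkμ : k = m * μ := by rw [← hk, ← hk0]; rfl
  have hl : ∀ g : A, g ≠ 1 →
      cnt (fun x => x ∈ D ∧ x * g⁻¹ ∈ D) = if g ∈ N then l1 else l2 := by
    intro g hg
    rw [← hdds g hg]
    refine Nat.card_congr ⟨fun x => ⟨(x.1, x.1 * g⁻¹), x.2.1, x.2.2, by simp⟩,
      fun z => ⟨z.1.1, z.2.1, ?_⟩, ?_, ?_⟩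
    · obtain ⟨⟨x, y⟩, hx, hy, h⟩ := z
      simp only at hx hy h ⊢
      rw [← h]; simpa using hy
    · intro x; rfl
    · rintro ⟨⟨x, y⟩, hx, hy, h⟩
      simp only at h
      subst h
      simp
  have hkpos : 0 < k := by
    rw [← hk]
    have := hDne.to_subtype
    exact Nat.card_pos
  have hμ0 : 0 < μ := by
    rcases Nat.eq_zero_or_pos μ with h | h
    · subst h; simp at hkμ; omega
    · exact h
  have hlt : k < m * n := by omega
  have hμn : μ < n := by
    rw [hkμ] at hlt
    exact Nat.lt_of_mul_lt_mul_left hlt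
  have hmk : m * n - k = m * (n - μ) := by rw [hkμ, Nat.mul_sub]
  have hq : m * μ * (n - μ) = n * n * (n - 1) := by
    rw [hmk, hkμ] at heq
    have hm' : (m:ℚ) ≠ 0 := by positivity
    have hn0 : (n:ℚ) ≠ 0 := by positivity
    have hμq : (μ:ℚ) ≠ 0 := by positivity
    have hn1q : ((n:ℚ) - 1) ≠ 0 := by
      have : (1:ℚ) < n := by exact_mod_cast hn1
      linarith
    have hd : ((n:ℚ) - μ) ≠ 0 := by
      have : (μ:ℚ) < n := by exact_mod_cast hμn
      linarith
    push_cast [Nat.cast_sub hμn.le] at heq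
    field_simp at heq
    have : ((m * μ * (n - μ) : ℕ) : ℚ) = ((n * n * (n - 1) : ℕ) : ℚ) := by
      push_cast [Nat.cast_sub hμn.le, Nat.cast_sub hn1.le]
      linear_combination -heq
    exact_mod_cast this
  have hG : Fintype.card G = 2 * (m * n) := by rw [hcardG, hA]
  have hmn : 1 < m * n := by nlinarith
  rcases hXi with ⟨hXi, rfl⟩ | ⟨hXi, rfl⟩
  · obtain ⟨a, c, p1, p2, p3, p4, p5, p6, p7, p8⟩ :=
      core ι hinj b hb2 hbconj hbnot hdecomp N hNbot D m n μ l1 l2 hm1 hn1 hμ0 hμn hA hn' hμ' hl hq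
        (by rintro ⟨rfl, rfl, rfl⟩; exact hne ⟨rfl, rfl, hkμ⟩) (X2 ∪ Xi) (by rw [hX2, hXi])
    rw [← hkμ] at p1 p2 p6
    exact ⟨a, c, p1, p2, p3, p4, hG, p5, p6, p7, p8, hmn⟩
  · have hμc : ∀ g : A, cnt (fun x => x ∈ (Set.univ : Set A) \ D ∧ x * g⁻¹ ∈ N) = n - μ := by
      intro g
      have := E_compl_mu N D n μ hn' hμ' g
      have h2 := cnt_iff (fun x => x ∈ (Set.univ : Set A) \ D ∧ x * g⁻¹ ∈ N)
        (fun x => x ∉ D ∧ x * g⁻¹ ∈ N) (by simp)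
      omega
    have hlc : ∀ g : A, g ≠ 1 →
        cnt (fun x => x ∈ (Set.univ : Set A) \ D ∧ x * g⁻¹ ∈ (Set.univ : Set A) \ D)
          = if g ∈ N then m * n + l1 - 2 * k else m * n + l2 - 2 * k := by
      intro g hg
      have := E_compl_l D m n hA k (hk0.trans hkμ.symm) g
      have h2 := cnt_iff (fun x => x ∈ (Set.univ : Set A) \ D ∧ x * g⁻¹ ∈ (Set.univ : Set A) \ D)
        (fun x => x ∉ D ∧ x * g⁻¹ ∉ D) (by simp)
      rw [hl g hg] at this
      split_ifs at this ⊢ <;> omega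
    obtain ⟨a, c, p1, p2, p3, p4, p5, p6, p7, p8⟩ :=
      core ι hinj b hb2 hbconj hbnot hdecomp N hNbot ((Set.univ : Set A) \ D) m n (n - μ) _ _
        hm1 hn1 (by omega) (by omega) hA hn' hμc hlc
        (by rw [← hq, Nat.sub_sub_self hμn.le]; ring)
        (by
          rintro ⟨rfl, rfl, h⟩
          have : μ = 1 := by omega
          subst this
          exact hne ⟨rfl, rfl, hkμ⟩) (X2 ∪ Xi) (by rw [hX2, hXi])
    rw [← hmk] at p1 p2 p6
    exact ⟨a, c, p1, p2, p3, p4, hG, p5, p6, p7, p8, hmn⟩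
end
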